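/- arXiv:2604.14462 — 2 statements merged into one kernel-verified Lean document; each statement's English description precedes it below -/
import Mathlib

section
/- Let u_{m,n} denote the cardinality of NC(U_{m,n}). For all m ≥ 2 and n ≥ 1, u_{m,n} = 2·u_{m−1,n} + Σ_{k=1}^{n} u_{m−1,k−1}·2^{n−k}. -/
open Finset

/-- A finpartition of a finite set of points in the plane is *noncrossing* if the
convex hulls (over `ℝ`) of its blocks are pairwise disjoint. -/
def IsNoncrossing {P : Finset ℂ} (π : Finpartition P) : Prop :=
  (π.parts : Set (Finset ℂ)).Pairwise fun B₁ B₂ =>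
    Disjoint (convexHull ℝ (B₁ : Set ℂ)) (convexHull ℝ (B₂ : Set ℂ))

/-- The poset `NC(P)` of noncrossing partitions of `P`, ordered by refinement:
`π ≤ μ` iff every block of `μ` is a union of blocks of `π`. -/
abbrev NC (P : Finset ℂ) : Type := {π : Finpartition P // IsNoncrossing π}

/-- The blocks of a noncrossing partition. -/
def NC.parts {P : Finset ℂ} (π : NC P) : Finset (Finset ℂ) := π.1.parts

/-- Two points lie in a common block of a noncrossing partition. -/
def NC.SameBlock {P : Finset ℂ} (π : NC P) (a b : ℂ) : Prop :=
  ∃ B ∈ π.parts, a ∈ B ∧ b ∈ B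

/-- The open cone configuration `U_{m,n} = {1, …, m} ∪ {i, 2i, …, ni} ⊆ ℂ`. -/
noncomputable def Uconfig (m n : ℕ) : Finset ℂ :=
  ((Finset.Icc 1 m).image fun j : ℕ => (j : ℂ)) ∪
    ((Finset.Icc 1 n).image fun k : ℕ => (k : ℂ) * Complex.I)

/-!
Index the points of `U_{m,n}` by the disjoint sum of two chains, each ray being ordered by distance
from the origin. Four points with `a ≤ b` and `b' ≤ a'` have meeting segments `[a, a']` and
`[b, b']`, while two sets of points without such a configuration are separated by a line meeting
both axes. So a partition is noncrossing iff its equivalence relation is *layered*: of any two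
blocks, one lies further out than the other wherever they share a ray.

Layered relations are counted by peeling off the outermost points `x` of the real ray and `y` of
the imaginary ray. Either `x` is merged with its predecessor, or `x` is a singleton, each of which
accounts for `u_{m-1,n}`, or `x` is *bridged*: related to some point of the other ray but to no
other point of its own. For the number `b_n` of bridged relations, `y` is merged with its
predecessor, or is a singleton, or else `{x, y}` is a block, because blocks of `x` and `y` reaching
the other ray cannot be distinct. Hence `b_n = 2 b_{n-1} + u_{m-1,n-1}`, which unfolds to the sum.
-/

section Layered

variable {α β : Type*} [Preorder α] [Preorder β]

/-- A setoid is layered if no two distinct classes `A`, `B` have both an element of `A` below an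
element of `B` and an element of `B` below an element of `A`. For points on two rays, ordered on
each ray by distance from the origin, this encodes being noncrossing. -/
def IsLayered (r : Setoid α) : Prop :=
  ∀ ⦃a a' b b'⦄, r a a' → r b b' → a ≤ b → b' ≤ a' → r a b

variable (α) in
/-- The set of all layered setoids on `α`. -/
def layeredSetoids : Set (Setoid α) := {r | IsLayered r}

theorem isLayered_iff {r : Setoid α} :
    IsLayered r ↔ ∀ a b, ¬ r a b →
      (∀ a' ∈ {x | r a x}, ∀ b' ∈ {x | r b x}, ¬ a' ≤ b') ∨
        ∀ a' ∈ {x | r a x}, ∀ b' ∈ {x | r b x}, ¬ b' ≤ a' := by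
  constructor
  · intro hr a b hab
    by_contra! h
    obtain ⟨⟨a₁, ha₁, b₁, hb₁, hle⟩, a₂, ha₂, b₂, hb₂, hle'⟩ := h
    have : r a₁ b₁ := hr (r.trans (r.symm ha₁) ha₂) (r.trans (r.symm hb₁) hb₂) hle hle'
    exact hab (r.trans ha₁ (r.trans this (r.symm hb₁)))
  · intro h a a' b b' haa hbb hab hba
    by_contra hr
    rcases h a b hr with h | h
    · exact h a (r.refl a) b (r.refl b) hab
    · exact h a' haa b' hbb hba

theorem IsLayered.rel_of_le_of_le {r : Setoid α} (hr : IsLayered r) {a b c : α} (hac : r c a)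
    (hab : a ≤ b) (hbc : b ≤ c) : r c b :=
  r.trans hac (hr (r.symm hac) (r.refl b) hab hbc)

theorem IsLayered.comap {f : α → β} (hf : Monotone f) {r : Setoid β} (hr : IsLayered r) :
    IsLayered (r.comap f) :=
  fun _ _ _ _ haa hbb hab hba => hr haa hbb (hf hab) (hf hba)

theorem bijOn_comap_of_leftInverse {ι : α → β} {f : β → α} (hι : Monotone ι) (hf : Monotone f)
    (h : Function.LeftInverse f ι) {p : β} (hp : ∀ b, b ∉ Set.range ι → b = p) :
    Set.BijOn (Setoid.comap ι) {r | IsLayered r ∧ r p (ι (f p))} (layeredSetoids α) := by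
  have rel_retract {r : Setoid β} (hr : r p (ι (f p))) (b : β) : r b (ι (f b)) := by
    by_cases hb : b ∈ Set.range ι
    · obtain ⟨a, rfl⟩ := hb
      rw [h a]
    · rwa [hp b hb]
  refine Set.InvOn.bijOn (f' := Setoid.comap f) ⟨?_, ?_⟩ (fun r hr => hr.1.comap hι) ?_
  · rintro r ⟨-, hr⟩
    ext a b
    change r (ι (f a)) (ι (f b)) ↔ r a b
    exact ⟨fun hab => r.trans (rel_retract hr a) (r.trans hab (r.symm (rel_retract hr b))),
      fun hab => r.trans (r.symm (rel_retract hr a)) (r.trans hab (rel_retract hr b))⟩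
  · intro r _
    ext a b
    simp only [Setoid.comap_rel, h a, h b]
  · intro r hr
    refine ⟨hr.comap hf, ?_⟩
    rw [Setoid.comap_rel, h]

end Layered

section ExtendSetoid

variable {α β : Type*}

/-- The setoid on `β` whose classes are the images under `ι` of the classes of `r`, together with
the complement of the range of `ι` as one further class. -/
noncomputable def extendSetoid (ι : α → β) (r : Setoid α) : Setoid β :=
  Setoid.ker (Function.extend ι (fun a => some (Quotient.mk r a)) fun _ => none)

variable {ι : α → β} {r : Setoid α}

theorem extendSetoid_apply_apply (hι : Function.Injective ι) {a b : α} :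
    extendSetoid ι r (ι a) (ι b) ↔ r a b := by
  rw [extendSetoid, Setoid.ker_def, hι.extend_apply, hι.extend_apply, Option.some_inj, Quotient.eq]

theorem comap_extendSetoid (hι : Function.Injective ι) : (extendSetoid ι r).comap ι = r :=
  Setoid.ext fun _ _ => extendSetoid_apply_apply hι

theorem extendSetoid_of_notMem_range (hι : Function.Injective ι) {p b : β}
    (hp : p ∉ Set.range ι) : extendSetoid ι r p b ↔ b ∉ Set.range ι := by
  rw [extendSetoid, Setoid.ker_def, Function.extend_apply' _ _ _ hp]
  by_cases hb : b ∈ Set.range ι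
  · obtain ⟨a, rfl⟩ := hb
    simp [hι.extend_apply]
  · simp [Function.extend_apply' _ _ _ hb, hb]

theorem le_of_comap_le_of_class_eq_compl_range {r s : Setoid β} {p : β}
    (hr : ∀ b, r p b ↔ b ∉ Set.range ι) (hs : ∀ b, s p b ↔ b ∉ Set.range ι)
    (h : r.comap ι ≤ s.comap ι) : r ≤ s := by
  intro a b hab
  by_cases ha : r p a
  · have hb : r p b := r.trans ha hab
    exact s.trans (s.symm ((hs a).2 ((hr a).1 ha))) ((hs b).2 ((hr b).1 hb))
  · have hb : ¬ r p b := fun hb => ha (r.trans hb (r.symm hab))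
    rw [hr, not_not] at ha hb
    obtain ⟨a, rfl⟩ := ha
    obtain ⟨b, rfl⟩ := hb
    exact h hab

variable [Preorder α] [Preorder β]

theorem isLayered_extendSetoid {ι : α ↪o β} (hι : IsLowerSet (Set.range ι)) (hr : IsLayered r) :
    IsLayered (extendSetoid ι r) := by
  have class_of_notMem {p b : β} (hp : p ∉ Set.range ι) :
      extendSetoid ι r p b ↔ b ∉ Set.range ι :=
    extendSetoid_of_notMem_range ι.injective hp
  have mem_of_rel {a b : β} (ha : a ∈ Set.range ι) (hab : extendSetoid ι r a b) :
      b ∈ Set.range ι :=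
    by_contra fun hb => (class_of_notMem hb).1 (Setoid.symm' _ hab) ha
  intro a a' b b' haa hbb hab hba
  by_cases hb : b ∈ Set.range ι
  · have ha := hι hab hb
    obtain ⟨a, rfl⟩ := ha
    obtain ⟨a', rfl⟩ := mem_of_rel ⟨a, rfl⟩ haa
    obtain ⟨b, rfl⟩ := hb
    obtain ⟨b', rfl⟩ := mem_of_rel ⟨b, rfl⟩ hbb
    rw [extendSetoid_apply_apply ι.injective] at haa hbb ⊢
    exact hr haa hbb (ι.le_iff_le.1 hab) (ι.le_iff_le.1 hba)
  · have hb' := (class_of_notMem hb).1 hbb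
    have ha' : a' ∉ Set.range ι := fun h => hb' (hι hba h)
    have ha : a ∉ Set.range ι := (class_of_notMem ha').1 (Setoid.symm' _ haa)
    exact (class_of_notMem ha).2 hb

theorem bijOn_comap_of_class_eq_compl_range {ι : α ↪o β} (hι : IsLowerSet (Set.range ι)) {p : β}
    (hp : p ∉ Set.range ι) :
    Set.BijOn (Setoid.comap ι) {r | IsLayered r ∧ ∀ b, r p b ↔ b ∉ Set.range ι}
      (layeredSetoids α) :=
  ⟨fun _ hr => hr.1.comap ι.monotone,
    fun _ hr _ hs h => (le_of_comap_le_of_class_eq_compl_range hr.2 hs.2 h.le).antisymm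
      (le_of_comap_le_of_class_eq_compl_range hs.2 hr.2 h.ge),
    fun r hr => ⟨extendSetoid ι r,
      ⟨isLayered_extendSetoid hι hr, fun _ => extendSetoid_of_notMem_range ι.injective hp⟩,
      comap_extendSetoid ι.injective⟩⟩

end ExtendSetoid

section Sum

variable {α β γ δ : Type*}

theorem isLowerSet_range_sumMap [Preorder γ] [Preorder δ] {f : α → γ} {g : β → δ}
    (hf : IsLowerSet (Set.range f)) (hg : IsLowerSet (Set.range g)) :
    IsLowerSet (Set.range (Sum.map f g)) := by
  rintro _ (c | d) hle ⟨a | b, rfl⟩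
  · obtain ⟨a, rfl⟩ := hf (Sum.inl_le_inl_iff.1 hle) ⟨a, rfl⟩
    exact ⟨.inl a, rfl⟩
  · exact (Sum.not_inl_le_inr hle).elim
  · exact (Sum.not_inr_le_inl hle).elim
  · obtain ⟨b, rfl⟩ := hg (Sum.inr_le_inr_iff.1 hle) ⟨b, rfl⟩
    exact ⟨.inr b, rfl⟩

theorem leftInverse_sumMap {f : α → γ} {f' : γ → α} {g : β → δ} {g' : δ → β}
    (hf : Function.LeftInverse f' f) (hg : Function.LeftInverse g' g) :
    Function.LeftInverse (Sum.map f' g') (Sum.map f g)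
  | .inl a => congrArg Sum.inl (hf a)
  | .inr b => congrArg Sum.inr (hg b)

variable [Preorder α] [Preorder β] [Preorder γ] [Preorder δ]

theorem monotone_sumMap {f : α → γ} {g : β → δ} (hf : Monotone f) (hg : Monotone g) :
    Monotone (Sum.map f g)
  | .inl _, .inl _, h => Sum.inl_le_inl_iff.2 (hf (Sum.inl_le_inl_iff.1 h))
  | .inr _, .inr _, h => Sum.inr_le_inr_iff.2 (hg (Sum.inr_le_inr_iff.1 h))
  | .inl _, .inr _, h => (Sum.not_inl_le_inr h).elim
  | .inr _, .inl _, h => (Sum.not_inr_le_inl h).elim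

/-- `Sum.map` as an order embedding between disjoint sums of orders. -/
def sumMapOrderEmbedding (f : α ↪o γ) (g : β ↪o δ) : α ⊕ β ↪o γ ⊕ δ :=
  RelEmbedding.sumLiftRelMap f g

theorem bijOn_comap_sumMap {f : α ↪o γ} {g : β ↪o δ} (hf : IsLowerSet (Set.range f))
    (hg : IsLowerSet (Set.range g)) {p : γ ⊕ δ} (hp : p ∉ Set.range (Sum.map f g)) :
    Set.BijOn (Setoid.comap (Sum.map f g))
      {r | IsLayered r ∧ ∀ b, r p b ↔ b ∉ Set.range (Sum.map f g)} (layeredSetoids (α ⊕ β)) :=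
  bijOn_comap_of_class_eq_compl_range (ι := sumMapOrderEmbedding f g)
    (isLowerSet_range_sumMap hf hg) hp

end Sum

section Fin

open Sum

variable {m n : ℕ}

theorem isLowerSet_range_castSucc (n : ℕ) :
    IsLowerSet (Set.range (Fin.castSuccOrderEmb (n := n))) := by
  change IsLowerSet (Set.range (Fin.castSucc (n := n)))
  rw [Fin.range_castSucc]
  exact fun _ _ hle => lt_of_le_of_lt (Fin.le_def.1 hle)

theorem notMem_range_map_castSucc_left {α : Type*} (b : Fin (m + 1) ⊕ α) :
    b ∉ Set.range (Sum.map Fin.castSucc id) ↔ b = inl (Fin.last m) := by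
  rcases b with i | a <;> simp [Fin.exists_castSucc_eq]

theorem notMem_range_map_castSucc_right {α : Type*} (b : α ⊕ Fin (n + 1)) :
    b ∉ Set.range (Sum.map id Fin.castSucc) ↔ b = inr (Fin.last n) := by
  rcases b with a | j <;> simp [Fin.exists_castSucc_eq]

theorem notMem_range_map_castSucc_both (b : Fin (m + 1) ⊕ Fin (n + 1)) :
    b ∉ Set.range (Sum.map Fin.castSucc Fin.castSucc) ↔
      b = inl (Fin.last m) ∨ b = inr (Fin.last n) := by
  rcases b with i | j <;> simp [Fin.exists_castSucc_eq]

theorem bijOn_comap_castSucc_inl_isolated {α : Type*} [Preorder α] :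
    Set.BijOn (Setoid.comap (Sum.map Fin.castSucc id))
      {r | IsLayered r ∧ ∀ b, r (inl (Fin.last m)) b ↔ b = inl (Fin.last m)}
      (layeredSetoids (Fin m ⊕ α)) := by
  simp only [← notMem_range_map_castSucc_left]
  exact bijOn_comap_sumMap (g := RelEmbedding.refl (α := α) (· ≤ ·)) (isLowerSet_range_castSucc m)
    (by simp [isLowerSet_univ])
    ((notMem_range_map_castSucc_left _).2 rfl)

theorem bijOn_comap_castSucc_inr_isolated {α : Type*} [Preorder α] :
    Set.BijOn (Setoid.comap (Sum.map id Fin.castSucc))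
      {r | IsLayered r ∧ ∀ b, r (inr (Fin.last n)) b ↔ b = inr (Fin.last n)}
      (layeredSetoids (α ⊕ Fin n)) := by
  simp only [← notMem_range_map_castSucc_right]
  exact bijOn_comap_sumMap (f := RelEmbedding.refl (α := α) (· ≤ ·)) (by simp [isLowerSet_univ])
    (isLowerSet_range_castSucc n)
    ((notMem_range_map_castSucc_right _).2 rfl)

theorem bijOn_comap_castSucc_inl_inr_paired :
    Set.BijOn (Setoid.comap (Sum.map Fin.castSucc Fin.castSucc))
      {r | IsLayered r ∧
        ∀ b, r (inl (Fin.last m)) b ↔ b = inl (Fin.last m) ∨ b = inr (Fin.last n)}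
      (layeredSetoids (Fin m ⊕ Fin n)) := by
  simp only [← notMem_range_map_castSucc_both]
  exact bijOn_comap_sumMap (isLowerSet_range_castSucc m) (isLowerSet_range_castSucc n)
    ((notMem_range_map_castSucc_both _).2 (.inl rfl))

theorem bijOn_comap_castSucc_inl_merged {α : Type*} [Preorder α] :
    Set.BijOn (Setoid.comap (Sum.map Fin.castSucc id))
      {r | IsLayered r ∧ r (inl (Fin.last (m + 1))) (inl (Fin.last m).castSucc)}
      (layeredSetoids (Fin (m + 1) ⊕ α)) := by
  have h := bijOn_comap_of_leftInverse
    (monotone_sumMap Fin.strictMono_castSucc.monotone (monotone_id (α := α)))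
    (monotone_sumMap (Fin.predAbove_right_monotone (Fin.last m)) monotone_id)
    (leftInverse_sumMap (fun _ => Fin.predAbove_last_castSucc) fun _ => rfl)
    fun b => (notMem_range_map_castSucc_left b).1
  simpa only [Sum.map_inl, Fin.predAbove_right_last] using h

theorem bijOn_comap_castSucc_inr_merged {α : Type*} [Preorder α] :
    Set.BijOn (Setoid.comap (Sum.map id Fin.castSucc))
      {r | IsLayered r ∧ r (inr (Fin.last (n + 1))) (inr (Fin.last n).castSucc)}
      (layeredSetoids (α ⊕ Fin (n + 1))) := by
  have h := bijOn_comap_of_leftInverse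
    (monotone_sumMap (monotone_id (α := α)) Fin.strictMono_castSucc.monotone)
    (monotone_sumMap monotone_id (Fin.predAbove_right_monotone (Fin.last n)))
    (leftInverse_sumMap (fun _ => rfl) fun _ => Fin.predAbove_last_castSucc)
    fun b => (notMem_range_map_castSucc_right b).1
  simpa only [Sum.map_inr, Fin.predAbove_right_last] using h

theorem finite_setoid (α : Type*) [Finite α] : Finite (Setoid α) :=
  Finite.of_injective (fun r : Setoid α => ⇑r) fun _ _ => Setoid.eq_iff_rel_eq.2

theorem IsLayered.rel_last_castSucc_iff_exists {r : Setoid (Fin (n + 2))} (hr : IsLayered r) :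
    r (Fin.last (n + 1)) (Fin.last n).castSucc ↔
      ∃ i : Fin (n + 1), r (Fin.last (n + 1)) i.castSucc :=
  ⟨fun h => ⟨_, h⟩, fun ⟨i, hi⟩ =>
    hr.rel_of_le_of_le hi (Fin.castSucc_le_castSucc_iff.2 (Fin.le_last i)) (Fin.le_last _)⟩

/-- The layered setoids on `Fin (m + 1) ⊕ Fin n` in which the last point of `Fin (m + 1)` is
related to some point of `Fin n` but to no other point of `Fin (m + 1)`. -/
def bridgedSetoids (m n : ℕ) : Set (Setoid (Fin (m + 1) ⊕ Fin n)) :=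
  {r | IsLayered r ∧ (∃ j, r (inl (Fin.last m)) (inr j)) ∧
    ∀ i : Fin m, ¬ r (inl (Fin.last m)) (inl i.castSucc)}

theorem layeredSetoids_eq_union (m n : ℕ) :
    layeredSetoids (Fin (m + 2) ⊕ Fin n) =
      {r | IsLayered r ∧ r (inl (Fin.last (m + 1))) (inl (Fin.last m).castSucc)} ∪
        ({r | IsLayered r ∧
          ∀ b, r (inl (Fin.last (m + 1))) b ↔ b = inl (Fin.last (m + 1))} ∪
        bridgedSetoids (m + 1) n) := by
  refine Set.Subset.antisymm (fun r hr => ?_)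
    (Set.union_subset (fun r h => h.1) (Set.union_subset (fun r h => h.1) fun r h => h.1))
  have hiff := (hr.comap Sum.inl_mono).rel_last_castSucc_iff_exists
  simp only [Setoid.comap_rel] at hiff
  by_cases hpred : r (inl (Fin.last (m + 1))) (inl (Fin.last m).castSucc)
  · exact .inl ⟨hr, hpred⟩
  · have hinl : ∀ i : Fin (m + 1), ¬ r (inl (Fin.last (m + 1))) (inl i.castSucc) :=
      not_exists.1 (mt hiff.2 hpred)
    by_cases hinr : ∃ j, r (inl (Fin.last (m + 1))) (inr j)
    · exact .inr (.inr ⟨hr, hinr, hinl⟩)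
    · refine .inr (.inl ⟨hr, ?_⟩)
      rw [Sum.forall, Fin.forall_fin_succ']
      simp [hinl, not_exists.1 hinr]

theorem ncard_layeredSetoids_succ (m n : ℕ) :
    (layeredSetoids (Fin (m + 2) ⊕ Fin n)).ncard =
      2 * (layeredSetoids (Fin (m + 1) ⊕ Fin n)).ncard + (bridgedSetoids (m + 1) n).ncard := by
  have := finite_setoid (Fin (m + 2) ⊕ Fin n)
  rw [layeredSetoids_eq_union, Set.ncard_union_eq, Set.ncard_union_eq,
    bijOn_comap_castSucc_inl_merged.ncard_eq, bijOn_comap_castSucc_inl_isolated.ncard_eq]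
  · ring
  · refine Set.disjoint_left.2 fun r hr hr' => ?_
    obtain ⟨j, hj⟩ := hr'.2.1
    exact inr_ne_inl ((hr.2 _).1 hj)
  · refine Set.disjoint_left.2 fun r hr hr' => ?_
    rcases hr' with hr' | hr'
    · exact (Fin.castSucc_ne_last _) (inl_injective ((hr'.2 _).1 hr.2))
    · exact hr'.2.2 _ hr.2

theorem bridgedSetoids_zero (m : ℕ) : bridgedSetoids m 0 = ∅ :=
  Set.eq_empty_of_forall_notMem fun _ hr => hr.2.1.elim fun j => j.elim0

theorem comap_mem_bridgedSetoids_iff {r : Setoid (Fin (m + 1) ⊕ Fin (n + 1))} (hr : IsLayered r)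
    (h : r (inl (Fin.last m)) (inr (Fin.last n)) →
      ∃ j : Fin n, r (inl (Fin.last m)) (inr j.castSucc)) :
    r.comap (Sum.map id Fin.castSucc) ∈ bridgedSetoids m n ↔ r ∈ bridgedSetoids m (n + 1) := by
  have hlayered : IsLayered (r.comap (Sum.map id Fin.castSucc)) :=
    hr.comap (monotone_sumMap monotone_id Fin.strictMono_castSucc.monotone)
  simp only [bridgedSetoids, Set.mem_ofPred_eq, hr, hlayered, true_and, Setoid.comap_rel,
    Sum.map_inl, Sum.map_inr, id, Fin.exists_fin_succ', or_iff_left_of_imp h]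

theorem bijOn_comap_bridgedSetoids {s : Set (Setoid (Fin (m + 1) ⊕ Fin (n + 1)))}
    (hs : Set.BijOn (Setoid.comap (Sum.map id Fin.castSucc)) s
      (layeredSetoids (Fin (m + 1) ⊕ Fin n))) (hlayered : ∀ r ∈ s, IsLayered r)
    (h : ∀ r ∈ s, r (inl (Fin.last m)) (inr (Fin.last n)) →
      ∃ j : Fin n, r (inl (Fin.last m)) (inr j.castSucc)) :
    Set.BijOn (Setoid.comap (Sum.map id Fin.castSucc)) (s ∩ bridgedSetoids m (n + 1))
      (bridgedSetoids m n) := by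
  convert hs.subset_right (r := bridgedSetoids m n) fun r hr => hr.1 using 1
  exact Set.ext fun r => and_congr_right fun hr =>
    (comap_mem_bridgedSetoids_iff (hlayered r hr) (h r hr)).symm

theorem ncard_bridgedSetoids_isolated (m n : ℕ) :
    ({r | IsLayered r ∧ ∀ b, r (inr (Fin.last n)) b ↔ b = inr (Fin.last n)} ∩
      bridgedSetoids m (n + 1)).ncard = (bridgedSetoids m n).ncard :=
  (bijOn_comap_bridgedSetoids bijOn_comap_castSucc_inr_isolated (fun _ hr => hr.1)
    fun r hr hxy => (inl_ne_inr ((hr.2 _).1 (r.symm' hxy))).elim).ncard_eq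

theorem ncard_bridgedSetoids_merged (m n : ℕ) :
    ({r | IsLayered r ∧ ∃ j : Fin n, r (inr (Fin.last n)) (inr j.castSucc)} ∩
      bridgedSetoids m (n + 1)).ncard = (bridgedSetoids m n).ncard := by
  cases n with
  | zero => simp [bridgedSetoids_zero]
  | succ n =>
    have merged_iff {r : Setoid (Fin (m + 1) ⊕ Fin (n + 2))} (hr : IsLayered r) :
        (∃ j : Fin (n + 1), r (inr (Fin.last (n + 1))) (inr j.castSucc)) ↔
          r (inr (Fin.last (n + 1))) (inr (Fin.last n).castSucc) :=
      (hr.comap Sum.inr_mono).rel_last_castSucc_iff_exists.symm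
    rw [Set.ext fun r => and_congr_right merged_iff]
    exact (bijOn_comap_bridgedSetoids bijOn_comap_castSucc_inr_merged (fun _ hr => hr.1)
      fun r hr hxy => ⟨_, r.trans hxy hr.2⟩).ncard_eq

theorem bridgedSetoids_succ_eq_union (m n : ℕ) :
    bridgedSetoids m (n + 1) =
      ({r | IsLayered r ∧ ∃ j : Fin n, r (inr (Fin.last n)) (inr j.castSucc)} ∩
        bridgedSetoids m (n + 1)) ∪
      (({r | IsLayered r ∧ ∀ b, r (inr (Fin.last n)) b ↔ b = inr (Fin.last n)} ∩
        bridgedSetoids m (n + 1)) ∪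
      {r | IsLayered r ∧
        ∀ b, r (inl (Fin.last m)) b ↔ b = inl (Fin.last m) ∨ b = inr (Fin.last n)}) := by
  refine Set.Subset.antisymm (fun r hr => ?_) (Set.union_subset Set.inter_subset_right
    (Set.union_subset Set.inter_subset_right fun r hr => ⟨hr.1, ?_⟩))
  · have ⟨hlayered, ⟨j, hj⟩, hinl⟩ := hr
    by_cases hmerged : ∃ j : Fin n, r (inr (Fin.last n)) (inr j.castSucc)
    · exact .inl ⟨⟨hlayered, hmerged⟩, hr⟩
    have hinr := not_exists.1 hmerged
    by_cases hbridge : ∃ i, r (inr (Fin.last n)) (inl i)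
    · obtain ⟨i, hi⟩ := hbridge
      have hxy : r (inl (Fin.last m)) (inr (Fin.last n)) :=
        r.trans hj (hlayered (r.symm hj) hi (Sum.inr_le_inr_iff.2 (Fin.le_last j))
          (Sum.inl_le_inl_iff.2 (Fin.le_last i)))
      refine .inr (.inr ⟨hlayered, ?_⟩)
      have hinr' (j : Fin n) : ¬ r (inl (Fin.last m)) (inr j.castSucc) :=
        fun h => hinr j (r.trans (r.symm hxy) h)
      rw [Sum.forall, Fin.forall_fin_succ', Fin.forall_fin_succ']
      simp [hinl, hinr', hxy]
    · exact .inr (.inl ⟨⟨hlayered, Sum.forall.2 ⟨by simp [not_exists.1 hbridge],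
        Fin.forall_fin_succ'.2 (by simp [hinr])⟩⟩, hr⟩)
  · exact ⟨⟨_, (hr.2 _).2 (.inr rfl)⟩, fun i hi => by simpa using (hr.2 _).1 hi⟩

theorem ncard_bridgedSetoids_succ (m n : ℕ) :
    (bridgedSetoids m (n + 1)).ncard =
      2 * (bridgedSetoids m n).ncard + (layeredSetoids (Fin m ⊕ Fin n)).ncard := by
  have := finite_setoid (Fin (m + 1) ⊕ Fin (n + 1))
  rw [bridgedSetoids_succ_eq_union, Set.ncard_union_eq, Set.ncard_union_eq,
    ncard_bridgedSetoids_merged, ncard_bridgedSetoids_isolated,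
    bijOn_comap_castSucc_inl_inr_paired.ncard_eq]
  · ring
  · refine Set.disjoint_left.2 fun r hr hr' => ?_
    exact inl_ne_inr ((hr.1.2 _).1 (r.symm ((hr'.2 _).2 (.inr rfl))))
  · refine Set.disjoint_left.2 fun r hr hr' => ?_
    obtain ⟨j, hj⟩ := hr.1.2
    rcases hr' with hr' | hr'
    · simpa using (hr'.1.2 _).1 hj
    · simpa using (hr'.2 _).1 (r.trans ((hr'.2 _).2 (.inr rfl)) hj)

theorem ncard_bridgedSetoids (m n : ℕ) :
    (bridgedSetoids m n).ncard =
      ∑ k ∈ Icc 1 n, (layeredSetoids (Fin m ⊕ Fin (k - 1))).ncard * 2 ^ (n - k) := by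
  induction n with
  | zero => simp [bridgedSetoids_zero]
  | succ n ih =>
    rw [ncard_bridgedSetoids_succ, ih, sum_Icc_succ_top (by lia), mul_sum, Nat.add_sub_cancel,
      Nat.sub_self, pow_zero, mul_one]
    congr 1
    refine sum_congr rfl fun k hk => ?_
    rw [Nat.succ_sub (mem_Icc.1 hk).2, pow_succ]
    ring

end Fin

section Geometry

theorem segment_smul_inter_nonempty {𝕜 E : Type*} [Field 𝕜] [LinearOrder 𝕜]
    [IsStrictOrderedRing 𝕜] [AddCommGroup E] [Module 𝕜 E] (u v : E) {s s' t t' : 𝕜} (hs : 0 ≤ s)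
    (hst : s ≤ t) (ht' : 0 < t') (hts : t' ≤ s') :
    (segment 𝕜 (s • u) (s' • v) ∩ segment 𝕜 (t • u) (t' • v)).Nonempty := by
  rcases hst.eq_or_lt with rfl | hst
  · exact ⟨s • u, left_mem_segment .., left_mem_segment ..⟩
  have hdet : 0 < t * s' - s * t' :=
    sub_pos.2 ((mul_lt_mul_of_pos_right hst ht').trans_le
      (mul_le_mul_of_nonneg_left hts (hs.trans hst.le)))
  have hs' : 0 ≤ s' := ht'.le.trans hts
  have ht : 0 ≤ t := hs.trans hst.le
  rw [← sub_nonneg] at hts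
  rw [← sub_pos] at hst
  refine ⟨(s * t * (s' - t') / (t * s' - s * t')) • u +
    (s' * t' * (t - s) / (t * s' - s * t')) • v,
    ⟨t * (s' - t') / (t * s' - s * t'), t' * (t - s) / (t * s' - s * t'),
      by positivity, by positivity, by rw [← add_div, div_eq_one_iff_eq hdet.ne']; ring, by module⟩,
    ⟨s * (s' - t') / (t * s' - s * t'), s' * (t - s) / (t * s' - s * t'),
      by positivity, by positivity, by rw [← add_div, div_eq_one_iff_eq hdet.ne']; ring, by module⟩⟩

/-- The points of `U_{m,n}`, indexed by the disjoint sum of the two rays, each ordered by distance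
from the origin. The point with zero-based index `i` on a ray has distance `i + 1`. -/
noncomputable def axisPoint (m n : ℕ) : Fin m ⊕ Fin n → ℂ :=
  Sum.elim (fun i => ((i : ℝ) + 1) • 1) fun j => ((j : ℝ) + 1) • Complex.I

variable {m n : ℕ}

theorem segment_axisPoint_inter_nonempty {a a' b b' : Fin m ⊕ Fin n} (hab : a ≤ b)
    (hba : b' ≤ a') :
    (segment ℝ (axisPoint m n a) (axisPoint m n a') ∩
      segment ℝ (axisPoint m n b) (axisPoint m n b')).Nonempty := by
  -- Four points on one ray are the case `u = v` of `segment_smul_inter_nonempty`.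
  rcases a with i | i <;> rcases b with j | j <;> rcases a' with i' | i' <;>
    rcases b' with j' | j' <;>
    simp only [Sum.inl_le_inl_iff, Sum.inr_le_inr_iff, Sum.not_inl_le_inr, Sum.not_inr_le_inl,
      Fin.le_def] at hab hba <;>
    exact segment_smul_inter_nonempty _ _ (by positivity) (by gcongr) (by positivity) (by gcongr)

theorem exists_pos_between {ι : Type*} [Finite ι] {f : ι → ℝ} (hf : ∀ i, 0 < f i) {A B : Set ι}
    (h : ∀ a ∈ A, ∀ b ∈ B, f a < f b) :
    ∃ c, 0 < c ∧ (∀ a ∈ A, f a < c) ∧ ∀ b ∈ B, c < f b := by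
  classical
  have := Fintype.ofFinite ι
  obtain ⟨c, hAc, hcB⟩ := Order.exists_between_finsets (insert 0 (A.toFinset.image f))
    (B.toFinset.image f) (by simpa [hf] using h)
  simp only [mem_insert, mem_image, Set.mem_toFinset, forall_eq_or_imp, forall_exists_index,
    and_imp, forall_apply_eq_imp_iff₂] at hAc hcB
  exact ⟨c, hAc.1, hAc.2, hcB⟩

theorem disjoint_convexHull_image_axisPoint {A B : Set (Fin m ⊕ Fin n)}
    (h : ∀ a ∈ A, ∀ b ∈ B, ¬ b ≤ a) :
    Disjoint (convexHull ℝ (axisPoint m n '' A)) (convexHull ℝ (axisPoint m n '' B)) := by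
  obtain ⟨c, hc, hAc, hcB⟩ := exists_pos_between (f := fun i : Fin m => (i : ℝ) + 1)
    (fun _ => by positivity) (A := Sum.inl ⁻¹' A) (B := Sum.inl ⁻¹' B) fun i hi j hj => by
      simpa using h _ hi _ hj
  obtain ⟨d, hd, hAd, hdB⟩ := exists_pos_between (f := fun i : Fin n => (i : ℝ) + 1)
    (fun _ => by positivity) (A := Sum.inr ⁻¹' A) (B := Sum.inr ⁻¹' B) fun i hi j hj => by
      simpa using h _ hi _ hj
  -- The line through `c` on the real axis and `d * I` on the imaginary axis separates the hulls.
  let φ : ℂ →ₗ[ℝ] ℝ := c⁻¹ • Complex.reLm + d⁻¹ • Complex.imLm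
  have hA : convexHull ℝ (axisPoint m n '' A) ⊆ {z | φ z < 1} := by
    refine convexHull_min (Set.image_subset_iff.2 ?_) (convex_halfSpace_lt φ.isLinear 1)
    rintro (i | j) ha
    · simpa [φ, axisPoint, inv_mul_lt_one₀ hc] using hAc i ha
    · simpa [φ, axisPoint, inv_mul_lt_one₀ hd] using hAd j ha
  have hB : convexHull ℝ (axisPoint m n '' B) ⊆ {z | 1 < φ z} := by
    refine convexHull_min (Set.image_subset_iff.2 ?_) (convex_halfSpace_gt φ.isLinear 1)
    rintro (i | j) hb
    · simpa [φ, axisPoint, one_lt_inv_mul₀ hc] using hcB i hb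
    · simpa [φ, axisPoint, one_lt_inv_mul₀ hd] using hdB j hb
  exact Set.disjoint_of_subset hA hB (Set.disjoint_left.2 fun z (hz : φ z < 1) hz' =>
    lt_asymm hz hz')

theorem disjoint_convexHull_image_axisPoint_iff {A B : Set (Fin m ⊕ Fin n)} :
    Disjoint (convexHull ℝ (axisPoint m n '' A)) (convexHull ℝ (axisPoint m n '' B)) ↔
      (∀ a ∈ A, ∀ b ∈ B, ¬ a ≤ b) ∨ ∀ a ∈ A, ∀ b ∈ B, ¬ b ≤ a := by
  refine ⟨fun h => ?_, ?_⟩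
  · by_contra! hle
    obtain ⟨⟨a, ha, b, hb, hab⟩, a', ha', b', hb', hba⟩ := hle
    obtain ⟨z, hzA, hzB⟩ := segment_axisPoint_inter_nonempty hab hba
    exact Set.disjoint_left.1 h
      (segment_subset_convexHull (Set.mem_image_of_mem _ ha) (Set.mem_image_of_mem _ ha') hzA)
      (segment_subset_convexHull (Set.mem_image_of_mem _ hb) (Set.mem_image_of_mem _ hb') hzB)
  · rintro (h | h)
    · exact (disjoint_convexHull_image_axisPoint fun b hb a ha => h a ha b hb).symm
    · exact disjoint_convexHull_image_axisPoint h

theorem axisPoint_injective : Function.Injective (axisPoint m n) := by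
  rintro (i | i) (j | j) h <;>
    simp_all [axisPoint, Complex.ext_iff, Fin.ext_iff, Nat.cast_add_one_ne_zero]

theorem coe_image_Icc_one {β : Type*} [DecidableEq β] (k : ℕ) (f : ℕ → β) :
    ((Icc 1 k).image f : Set β) = Set.range fun i : Fin k => f (i + 1) := by
  ext z
  simp only [mem_coe, mem_image, mem_Icc, Set.mem_range, Fin.exists_iff]
  exact ⟨fun ⟨i, hi, hz⟩ => ⟨i - 1, by lia, by rwa [Nat.sub_add_cancel hi.1]⟩,
    fun ⟨i, hi, hz⟩ => ⟨i + 1, by lia, hz⟩⟩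

theorem range_axisPoint (m n : ℕ) : Set.range (axisPoint m n) = Uconfig m n := by
  rw [Uconfig, coe_union, coe_image_Icc_one, coe_image_Icc_one, axisPoint, Set.Sum.elim_range]
  simp

end Geometry

section BlockSetoid

variable {α γ : Type*} {s : Finset γ} {e : α → γ}

theorem mem_of_range_eq (he : Set.range e = s) (a : α) : e a ∈ s :=
  mem_coe.1 (he ▸ Set.mem_range_self a)

variable [DecidableEq γ]

/-- The setoid on the index type `α` of a family of points `e` that corresponds to a partition
of these points: two indices are related if their points lie in the same block. -/
def blockSetoid (e : α → γ) (π : Finpartition s) : Setoid α :=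
  Setoid.ker fun a => π.part (e a)

theorem blockSetoid_iff_mem_part (he : Set.range e = s) {π : Finpartition s} {a b : α} :
    blockSetoid e π a b ↔ e b ∈ π.part (e a) := by
  rw [π.mem_part_iff_part_eq_part (mem_of_range_eq he b) (mem_of_range_eq he a),
    blockSetoid, Setoid.ker_def, eq_comm]

theorem coe_part_eq_image (he : Set.range e = s) (π : Finpartition s) (a : α) :
    (π.part (e a) : Set γ) = e '' {b | blockSetoid e π a b} := by
  ext x
  constructor
  · intro hx
    obtain ⟨b, rfl⟩ : x ∈ Set.range e := he ▸ mem_coe.2 (π.part_subset _ hx)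
    exact ⟨b, (blockSetoid_iff_mem_part he).2 hx, rfl⟩
  · rintro ⟨b, hb, rfl⟩
    exact (blockSetoid_iff_mem_part he).1 hb

theorem mem_parts_iff_exists_part (he : Set.range e = s) {π : Finpartition s} {t : Finset γ} :
    t ∈ π.parts ↔ ∃ a, π.part (e a) = t := by
  constructor
  · intro ht
    obtain ⟨x, hx, rfl⟩ := π.part_surjOn ht
    obtain ⟨a, rfl⟩ : x ∈ Set.range e := he ▸ hx
    exact ⟨a, rfl⟩
  · rintro ⟨a, rfl⟩
    exact π.part_mem.2 (mem_of_range_eq he a)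

theorem blockSetoid_bijective (he : Set.range e = s) (hinj : Function.Injective e) :
    Function.Bijective (blockSetoid e : Finpartition s → Setoid α) := by
  classical
  refine ⟨fun π μ h => ?_, fun r => ⟨Finpartition.ofSetSetoid (extendSetoid e r) s, ?_⟩⟩
  · have part_eq (a : α) : π.part (e a) = μ.part (e a) := by
      rw [← coe_inj, coe_part_eq_image he, coe_part_eq_image he, h]
    ext t
    simp only [mem_parts_iff_exists_part he, part_eq]
  · ext a b
    rw [blockSetoid_iff_mem_part he, Finpartition.mem_part_ofSetSetoid_iff_rel]
    simp only [mem_of_range_eq he, true_and, extendSetoid_apply_apply hinj]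

end BlockSetoid

theorem isNoncrossing_iff_isLayered {m n : ℕ} {π : Finpartition (Uconfig m n)} :
    IsNoncrossing π ↔ IsLayered (blockSetoid (axisPoint m n) π) := by
  have he := range_axisPoint m n
  rw [isLayered_iff]
  simp only [← disjoint_convexHull_image_axisPoint_iff, ← coe_part_eq_image he]
  constructor
  · intro h a b hab
    exact h ((mem_parts_iff_exists_part he).2 ⟨a, rfl⟩) ((mem_parts_iff_exists_part he).2 ⟨b, rfl⟩)
      hab
  · intro h B₁ hB₁ B₂ hB₂ hne
    obtain ⟨a, rfl⟩ := (mem_parts_iff_exists_part he).1 hB₁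
    obtain ⟨b, rfl⟩ := (mem_parts_iff_exists_part he).1 hB₂
    exact h a b hne

theorem card_NC_Uconfig (m n : ℕ) :
    Nat.card (NC (Uconfig m n)) = (layeredSetoids (Fin m ⊕ Fin n)).ncard :=
  Nat.card_congr <| (Equiv.ofBijective _ <| blockSetoid_bijective (range_axisPoint m n)
    axisPoint_injective).subtypeEquiv fun _ => isNoncrossing_iff_isLayered

/-- For `m ≥ 2` and `n ≥ 1`,
`u_{m,n} = 2 u_{m-1,n} + Σ_{k=1}^{n} u_{m-1,k-1} 2^{n-k}` where `u_{m,n} = |NC(U_{m,n})|`. -/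
theorem nc_U_card_recursion (m n : ℕ) (hm : 2 ≤ m) (hn : 1 ≤ n) :
    Nat.card (NC (Uconfig m n)) =
      2 * Nat.card (NC (Uconfig (m - 1) n)) +
        ∑ k ∈ Finset.Icc 1 n, Nat.card (NC (Uconfig (m - 1) (k - 1))) * 2 ^ (n - k) := by
  obtain ⟨m, rfl⟩ := Nat.exists_eq_add_of_le' hm
  simp only [card_NC_Uconfig]
  rw [ncard_layeredSetoids_succ, ncard_bridgedSetoids]
  rfl
end

section
/- Let v_{m,n} = |NC(V_{m,n})|. In the ring of formal power series ℤ⟦X, Y⟧ in two variables, the generating function V(X,Y) = Σ_{m,n ≥ 0} v_{m,n} X^m Y^n satisfies (1 − 2X − 2Y + 3XY) · V(X,Y) = 1. -/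
open Finset

/-- The closed cone configuration `V_{m,n} = U_{m,n} ∪ {0}`. -/
noncomputable def Vconfig (m n : ℕ) : Finset ℂ := insert 0 (Uconfig m n)

/-- The bivariate generating function `V(X,Y) = Σ v_{m,n} X^m Y^n` in `ℤ⟦X,Y⟧`, where
`v_{m,n} = |NC(V_{m,n})|`, the variable `X` is `MvPowerSeries.X 0` and `Y` is
`MvPowerSeries.X 1`. -/
noncomputable def Vseries : MvPowerSeries (Fin 2) ℤ :=
  fun d => (Nat.card (NC (Vconfig (d 0) (d 1))) : ℤ)

/-! Lay the points of `Vconfig m n` out as the integers of `[-n, m]` on a line that is bent by a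
right angle at `0`, and view partitions of all these intervals as equivalence relations on `ℤ`. Fix
a noncrossing relation on `[-(n + 1), m + 1]`. If the outermost point `m + 1` is isolated or related
to its neighbour `m`, it can be deleted, and every noncrossing relation on `[-(n + 1), m]` arises in
this way from exactly two relations; likewise for `-(n + 1)` and `-n`. If neither of the two points
can be deleted, they form a block by themselves: as `m + 1` is not related to `m`, convexity forces
the rest of its block onto the other ray, the same holds for `-(n + 1)`, and the blocks of the two
points would cross if they were different. Removing this block leaves an arbitrary noncrossing
relation on `[-n, m]`. By inclusion-exclusion, the number `v m n` of noncrossing relations satisfies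
`v (m + 1) (n + 1) = 2 v m (n + 1) + 2 v (m + 1) n - 4 v m n + v m n`. -/

namespace ConePartition

section Counting

lemma ncard_add_ncard_sep_and {α : Type*} {s : Set α} (hs : s.Finite) (p q : α → Prop) :
    s.ncard + {a ∈ s | p a ∧ q a}.ncard =
      {a ∈ s | p a}.ncard + {a ∈ s | q a}.ncard + {a ∈ s | ¬ p a ∧ ¬ q a}.ncard := by
  have hfin (P : α → Prop) : {a ∈ s | P a}.Finite := hs.subset (Set.sep_subset _ _)
  have hunion := Set.ncard_union_add_ncard_inter {a ∈ s | p a} {a ∈ s | q a} (hfin p) (hfin q)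
  have hcompl := Set.ncard_inter_add_ncard_sdiff_eq_ncard s {a | p a ∨ q a} hs
  have hor : {a ∈ s | p a} ∪ {a ∈ s | q a} = s ∩ {a | p a ∨ q a} := Set.sep_or.symm
  have hdiff : s \ {a | p a ∨ q a} = {a ∈ s | ¬ p a ∧ ¬ q a} := by
    ext a
    simp only [Set.mem_sdiff, Set.mem_ofPred_eq, not_or]
  rw [← Set.sep_and, hor] at hunion
  rw [hdiff] at hcompl
  omega

end Counting

section Surgery

variable {α : Type*}

/-- The class of `x` is a singleton. -/
def IsIsolated (r : Setoid α) (x : α) : Prop := ∀ ⦃y⦄, r x y → y = x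

/-- The off-diagonal part of `r` lives on `s`. Encoding the partitions of all subsets `s` as
equivalence relations on one ambient type makes them comparable for varying `s`. -/
def IsSupportedOn (r : Setoid α) (s : Set α) : Prop := ∀ ⦃a b⦄, r a b → a ≠ b → a ∈ s

/-- The relation obtained from `r` by splitting `x` off its class. -/
def isolate (r : Setoid α) (x : α) : Setoid α where
  r a b := a = b ∨ a ≠ x ∧ b ≠ x ∧ r a b
  iseqv :=
    { refl _ := .inl rfl
      symm {a b} h := by have := @Setoid.symm' _ r a b; grind
      trans {a b c} h h' := by have := @Setoid.trans' _ r a b c; grind }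

/-- The relation obtained from `r` by moving `x` into the class of `y`. -/
def attach [DecidableEq α] (r : Setoid α) (x y : α) : Setoid α :=
  r.comap (Function.update id x y)

/-- `x` is isolated or in the class of its prescribed neighbour `y`; these are the two ways in which
an outermost point can be added to a noncrossing partition without interacting with the rest. -/
def IsRemovable (r : Setoid α) (x y : α) : Prop := IsIsolated r x ∨ r x y

variable {r : Setoid α} {x y : α}

lemma isolate_apply {a b : α} : isolate r x a b ↔ a = b ∨ a ≠ x ∧ b ≠ x ∧ r a b := Iff.rfl

lemma IsIsolated.rel_left_iff (h : IsIsolated r x) {a : α} : r x a ↔ a = x :=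
  ⟨@h a, fun e ↦ e ▸ r.refl' x⟩

lemma IsIsolated.rel_right_iff (h : IsIsolated r x) {a : α} : r a x ↔ a = x :=
  r.comm'.trans h.rel_left_iff

lemma IsIsolated.of_isSupportedOn {s : Set α} (h : IsSupportedOn r s) (hx : x ∉ s) :
    IsIsolated r x := fun _ hxy ↦ by_contra fun hne ↦ hx (h hxy (Ne.symm hne))

lemma IsSupportedOn.mono {s t : Set α} (h : IsSupportedOn r s) (hst : s ⊆ t) :
    IsSupportedOn r t := fun _ _ hab hne ↦ hst (h hab hne)

lemma IsSupportedOn.sdiff_singleton {s : Set α} (h : IsSupportedOn r s) (hx : IsIsolated r x) :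
    IsSupportedOn r (s \ {x}) := fun _ _ hab hne ↦
  ⟨h hab hne, fun e ↦ hne (by cases e; exact (hx hab).symm)⟩

lemma IsSupportedOn.isolate {s : Set α} (h : IsSupportedOn r s) (x : α) :
    IsSupportedOn (isolate r x) (s \ {x}) := fun a b hab hne ↦ by
  obtain ⟨hax, -, hr⟩ := hab.resolve_left hne
  exact ⟨h hr hne, hax⟩

variable [DecidableEq α]

lemma attach_apply {a b : α} :
    attach r x y a b ↔ r (if a = x then y else a) (if b = x then y else b) := by
  rw [attach, Setoid.comap_rel, Function.update_apply, Function.update_apply, id, id]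

lemma attach_rel (hxy : x ≠ y) : attach r x y x y := by
  rw [attach_apply, if_pos rfl, if_neg hxy.symm]

lemma isolate_attach (h : IsIsolated r x) (y : α) : isolate (attach r x y) x = r := by
  ext a b
  have := @h.rel_left_iff
  have := @h.rel_right_iff
  have := r.refl' a
  rw [isolate_apply, attach_apply]
  grind

lemma attach_isolate (hxy : x ≠ y) (h : r x y) : attach (isolate r x) x y = r := by
  ext a b
  have := @Setoid.symm' _ r
  have := @Setoid.trans' _ r
  have := r.refl'
  rw [attach_apply, isolate_apply]
  grind

lemma attach_injOn (x y : α) : Set.InjOn (attach · x y) {r : Setoid α | IsIsolated r x} :=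
  fun r hr s hs (h : attach r x y = attach s x y) ↦ by
    rw [← isolate_attach hr y, h, isolate_attach hs y]

lemma isRemovable_attach_iff {u v : α} (h : IsIsolated r x) (hux : u ≠ x) (huy : u ≠ y)
    (hvx : v ≠ x) : IsRemovable (attach r x y) u v ↔ IsRemovable r u v := by
  have hiso : IsIsolated (attach r x y) u ↔ IsIsolated r u := by
    refine ⟨fun hu b hb ↦ hu ?_, fun hu b hb ↦ ?_⟩
    · have hbx : b ≠ x := by
        rintro rfl
        exact hux (h.rel_right_iff.1 hb)
      rwa [attach_apply, if_neg hux, if_neg hbx]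
    · rw [attach_apply, if_neg hux] at hb
      have := hu hb
      grind
  simp only [IsRemovable, hiso, attach_apply, if_neg hux, if_neg hvx]

lemma attach_iff_of_isIsolated (hx : IsIsolated r x) (hy : IsIsolated r y) {a b : α} :
    attach r x y a b ↔ r a b ∨ (a = x ∧ b = y) ∨ (a = y ∧ b = x) := by
  have := @hx.rel_left_iff
  have := @hx.rel_right_iff
  have := @hy.rel_left_iff
  have := @hy.rel_right_iff
  have := r.refl'
  rw [attach_apply]
  grind

lemma not_isRemovable_attach_left {u : α} (hx : IsIsolated r x) (hy : IsIsolated r y) (hxy : x ≠ y)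
    (hux : u ≠ x) (huy : u ≠ y) : ¬ IsRemovable (attach r x y) x u := by
  rintro (h | h)
  · exact hxy (h (attach_rel hxy)).symm
  · rw [attach_iff_of_isIsolated hx hy, hx.rel_left_iff] at h
    grind

lemma not_isRemovable_attach_right {u : α} (hx : IsIsolated r x) (hy : IsIsolated r y)
    (hxy : x ≠ y) (hux : u ≠ x) (huy : u ≠ y) : ¬ IsRemovable (attach r x y) y u := by
  rintro (h | h)
  · exact hxy (h (Setoid.symm' _ (attach_rel hxy)))
  · rw [attach_iff_of_isIsolated hx hy, hy.rel_left_iff] at h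
    grind

lemma IsSupportedOn.attach {s : Set α} (h : IsSupportedOn r s) (x y : α) :
    IsSupportedOn (attach r x y) (insert x (insert y s)) := by
  intro a b hab hne
  by_contra ha
  simp only [Set.mem_insert_iff, not_or] at ha
  rw [attach_apply, if_neg ha.1] at hab
  have := IsIsolated.of_isSupportedOn h ha.2.2 hab
  grind

end Surgery

section Noncrossing

variable {α β : Type*} [LinearOrder α] [Zero α] [LinearOrder β] [Zero β]

/-- Noncrossing equivalence relations on a line that is bent by a right angle at `0`: the
nonnegative elements are thought of as lying on one ray and the nonpositive ones on the other.
Blocks are convex along each ray, and two segments that join the rays and meet belong to a single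
block. -/
structure IsConeNoncrossing (r : Setoid α) : Prop where
  convex : ∀ ⦃a b c⦄, a ≤ b → b ≤ c → 0 ≤ a ∨ c ≤ 0 → r a c → r a b
  nested : ∀ ⦃a b c d⦄, 0 ≤ a → a ≤ c → b ≤ d → d ≤ 0 → r a b → r c d → r a c

/-- On each of the two rays, every element of `A` is strictly closer to `0` than every element
of `B`. -/
def IsInner (A B : Set α) : Prop :=
  (∀ a ∈ A, ∀ b ∈ B, 0 ≤ a → 0 ≤ b → a < b) ∧ ∀ a ∈ A, ∀ b ∈ B, a ≤ 0 → b ≤ 0 → b < a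

lemma IsInner.zero_notMem {A B : Set α} (h : IsInner A B) (hA : A.Nonempty) : 0 ∉ B := by
  obtain ⟨a, ha⟩ := hA
  intro h0
  rcases le_total 0 a with ha0 | ha0
  · exact (h.1 a ha 0 h0 ha0 le_rfl).not_ge ha0
  · exact (h.2 a ha 0 h0 ha0 le_rfl).not_ge ha0

lemma IsInner.image {A B : Set α} (h : IsInner A B) {f : α → β} (hf : StrictMono f)
    (h0 : f 0 = 0) : IsInner (f '' A) (f '' B) := by
  simp only [IsInner, Set.forall_mem_image, ← h0, hf.le_iff_le, hf.lt_iff_lt]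
  exact h

namespace IsConeNoncrossing

variable {r : Setoid α}

lemma bot : IsConeNoncrossing (⊥ : Setoid α) where
  convex _ _ _ hab hbc _ (hac : _ = _) := hab.antisymm (hbc.trans hac.ge)
  nested _ _ _ _ ha hac _ hd _ (hcd : _ = _) :=
    hac.antisymm (hcd.le.trans (hd.trans ha))

lemma comap (h : IsConeNoncrossing r) {f : β → α} (hf : Monotone f) (h0 : f 0 = 0) :
    IsConeNoncrossing (r.comap f) where
  convex _ _ _ hab hbc hac :=
    h.convex (hf hab) (hf hbc) (hac.imp (fun ha ↦ h0 ▸ hf ha) fun hc ↦ h0 ▸ hf hc)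
  nested _ _ _ _ ha hac hbd hd :=
    h.nested (h0 ▸ hf ha) (hf hac) (hf hbd) (h0 ▸ hf hd)

lemma comap_antitone (h : IsConeNoncrossing r) {f : β → α} (hf : Antitone f) (h0 : f 0 = 0) :
    IsConeNoncrossing (r.comap f) where
  convex _ _ _ hab hbc hac hr :=
    r.trans' hr (h.convex (hf hbc) (hf hab)
      (hac.symm.imp (fun hc ↦ h0 ▸ hf hc) fun ha ↦ h0 ▸ hf ha) (r.symm' hr))
  nested _ _ _ _ ha hac hbd hd hab hcd :=
    r.trans' hab (r.trans' (r.symm' (h.nested (h0 ▸ hf hd) (hf hbd) (hf hac) (h0 ▸ hf ha)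
      (r.symm' hcd) (r.symm' hab))) (r.symm' hcd))

lemma isolate (h : IsConeNoncrossing r) {x : α} (hx : ∀ ⦃a b⦄, r a b → a < x → b ≤ x) :
    IsConeNoncrossing (isolate r x) where
  convex a b c hab hbc h0 hac := by
    rcases hac with rfl | ⟨ha, hc, hac⟩
    · exact .inl (hab.antisymm hbc)
    · refine .inr ⟨ha, ?_, h.convex hab hbc h0 hac⟩
      rintro rfl
      exact hc ((hx hac (hab.lt_of_ne ha)).antisymm hbc)
  nested a b c d ha hac hbd hd hab hcd := by
    have := @h.nested a b c d
    have := @Setoid.symm' _ r c d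
    simp only [isolate_apply] at *
    grind

lemma attach (h : IsConeNoncrossing r) {x y : α} (hx : x < 0) (hy : 0 < y)
    (hr : IsSupportedOn r (Set.Ioo x y)) : IsConeNoncrossing (attach r x y) := by
  have hrx : IsIsolated r x := .of_isSupportedOn hr (by simp)
  have hry : IsIsolated r y := .of_isSupportedOn hr (by simp)
  have hbetween : ∀ {a b}, r a b → a = b ∨ x < a ∧ a < y ∧ x < b ∧ b < y := by
    intro a b hab
    by_cases hne : a = b
    · exact .inl hne
    · exact .inr ⟨(hr hab hne).1, (hr hab hne).2, (hr (r.symm' hab) (Ne.symm hne)).1,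
        (hr (r.symm' hab) (Ne.symm hne)).2⟩
  constructor
  · intro a b c hab hbc h0 hac
    rw [attach_iff_of_isIsolated hrx hry] at *
    have := @h.convex a b c
    grind
  · intro a b c d ha hac hbd hd hab hcd
    rw [attach_iff_of_isIsolated hrx hry] at *
    have := @h.nested a b c d
    have := @hbetween a b
    have := @hbetween c d
    have := r.refl' a
    grind

lemma isInner_or_isInner (h : IsConeNoncrossing r) {A B : Set α}
    (hA : ∀ a ∈ A, ∀ a' ∈ A, r a a') (hB : ∀ b ∈ B, ∀ b' ∈ B, r b b')
    (hAB : ∀ a ∈ A, ∀ b ∈ B, ¬ r a b) : IsInner A B ∨ IsInner B A := by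
  have hBA : ∀ b ∈ B, ∀ a ∈ A, ¬ r b a := fun b hb a ha hr ↦ hAB a ha b hb (r.symm' hr)
  by_contra! hcross
  simp only [IsInner, not_and_or] at hcross
  push Not at hcross
  obtain ⟨⟨a, ha, b, hb, _, hb0, hba⟩ | ⟨a, ha, b, hb, _, hb0, hba⟩,
    ⟨b', hb', a', ha', _, ha0', hab'⟩ | ⟨b', hb', a', ha', _, ha0', hab'⟩⟩ := hcross
  · rcases le_total b a' with hle | hle
    · exact hBA b hb a' ha' (h.convex hle hab' (.inl hb0) (hB b hb b' hb'))
    · exact hAB a' ha' b hb (h.convex hle hba (.inl ha0') (hA a' ha' a ha))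
  · exact hBA b hb a ha (h.nested hb0 hba hab' ha0' (hB b hb b' hb') (hA a ha a' ha'))
  · exact hAB a' ha' b' hb' (h.nested ha0' hab' hba hb0 (hA a' ha' a ha) (hB b' hb' b hb))
  · rcases le_total a b' with hle | hle
    · exact hAB a ha b' hb' (h.convex hle hab' (.inr ha0') (hA a ha a' ha'))
    · exact hBA b' hb' a ha (h.convex hle hba (.inr hb0) (hB b' hb' b hb))

end IsConeNoncrossing

end Noncrossing

section Geometry

/-- The point at signed distance `t` from `0` on the boundary of the closed first quadrant, which
is `t` for `t ≥ 0` and `-t * I` for `t ≤ 0`. -/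
noncomputable def quadrantPoint (t : ℝ) : ℂ := ⟨t⁺, t⁻⟩

lemma quadrantPoint_of_nonneg {t : ℝ} (ht : 0 ≤ t) : quadrantPoint t = ⟨t, 0⟩ := by
  rw [quadrantPoint, posPart_eq_self.2 ht, negPart_eq_zero.2 ht]

lemma quadrantPoint_of_nonpos {t : ℝ} (ht : t ≤ 0) : quadrantPoint t = ⟨0, -t⟩ := by
  rw [quadrantPoint, posPart_eq_zero.2 ht, negPart_eq_neg.2 ht]

lemma quadrantPoint_injective : Function.Injective quadrantPoint := fun s t h ↦ by
  rw [← posPart_sub_negPart s, ← posPart_sub_negPart t]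
  exact congrArg₂ (· - ·) (congrArg Complex.re h) (congrArg Complex.im h)

lemma quadrantPoint_mem_segment {a b c : ℝ} (hab : a ≤ b) (hbc : b ≤ c) (h : 0 ≤ a ∨ c ≤ 0) :
    quadrantPoint b ∈ segment ℝ (quadrantPoint a) (quadrantPoint c) := by
  obtain ⟨u, v, hu, hv, huv, rfl⟩ : b ∈ segment ℝ a c := by
    rw [segment_eq_Icc (hab.trans hbc)]
    exact ⟨hab, hbc⟩
  refine ⟨u, v, hu, hv, huv, ?_⟩
  rcases h with ha | hc
  · rw [quadrantPoint_of_nonneg ha, quadrantPoint_of_nonneg (ha.trans hab),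
      quadrantPoint_of_nonneg (ha.trans (hab.trans hbc))]
    simp [Complex.ext_iff]
  · rw [quadrantPoint_of_nonpos hc, quadrantPoint_of_nonpos (hbc.trans hc),
      quadrantPoint_of_nonpos (hab.trans (hbc.trans hc))]
    simp [Complex.ext_iff]
    ring

lemma not_disjoint_segment_quadrantPoint {a b c d : ℝ} (ha : 0 ≤ a) (hac : a < c) (hbd : b ≤ d)
    (hd : d ≤ 0) (hb : b < 0) :
    ¬ Disjoint (segment ℝ (quadrantPoint a) (quadrantPoint b))
      (segment ℝ (quadrantPoint c) (quadrantPoint d)) := by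
  rw [quadrantPoint_of_nonneg ha, quadrantPoint_of_nonneg (ha.trans hac.le),
    quadrantPoint_of_nonpos hb.le, quadrantPoint_of_nonpos hd]
  -- Cramer's rule for the lines `x / a - y / b = 1` and `x / c - y / d = 1`.
  have hD : 0 < a * d - b * c := by nlinarith
  rw [Set.not_disjoint_iff]
  refine ⟨⟨a * c * (d - b) / (a * d - b * c), b * d * (c - a) / (a * d - b * c)⟩,
    ⟨c * (d - b) / (a * d - b * c), -d * (c - a) / (a * d - b * c), ?_, ?_, ?_, ?_⟩,
    ⟨a * (d - b) / (a * d - b * c), -b * (c - a) / (a * d - b * c), ?_, ?_, ?_, ?_⟩⟩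
  · exact div_nonneg (mul_nonneg (by linarith) (by linarith)) hD.le
  · exact div_nonneg (mul_nonneg (by linarith) (by linarith)) hD.le
  · rw [← add_div, div_eq_one_iff_eq hD.ne']; ring
  · apply Complex.ext <;>
      simp only [Complex.add_re, Complex.smul_re, Complex.add_im, Complex.smul_im, smul_eq_mul] <;>
      ring
  · exact div_nonneg (mul_nonneg (by linarith) (by linarith)) hD.le
  · exact div_nonneg (mul_nonneg (by linarith) (by linarith)) hD.le
  · rw [← add_div, div_eq_one_iff_eq hD.ne']; ring
  · apply Complex.ext <;>
      simp only [Complex.add_re, Complex.smul_re, Complex.add_im, Complex.smul_im, smul_eq_mul] <;>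
      ring

lemma isLinearMap_re_div_add_im_div (s t : ℝ) :
    IsLinearMap ℝ fun w : ℂ ↦ w.re / s + w.im / t where
  map_add w z := by simp only [Complex.add_re, Complex.add_im]; ring
  map_smul c w := by simp only [Complex.smul_re, Complex.smul_im, smul_eq_mul]; ring

/-- The line through `s` and `t * I` separates the two sets. -/
lemma disjoint_convexHull_of_thresholds {s t : ℝ} (hs : 0 < s) (ht : 0 < t) {A B : Set ℝ}
    (hA : ∀ a ∈ A, -t < a ∧ a < s) (hB : ∀ b ∈ B, b < -t ∨ s < b) :
    Disjoint (convexHull ℝ (quadrantPoint '' A)) (convexHull ℝ (quadrantPoint '' B)) := by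
  have hlin := isLinearMap_re_div_add_im_div s t
  refine Set.disjoint_of_subset
    (convexHull_min (Set.image_subset_iff.2 fun a ha ↦ ?_) (convex_halfSpace_lt hlin 1))
    (convexHull_min (Set.image_subset_iff.2 fun b hb ↦ ?_) (convex_halfSpace_gt hlin 1))
    (Set.disjoint_left.2 fun _ h h' ↦ lt_asymm (Set.mem_ofPred.1 h) (Set.mem_ofPred.1 h'))
  · obtain ⟨hta, has⟩ := hA a ha
    rw [Set.mem_preimage, Set.mem_ofPred_eq]
    rcases le_total 0 a with h0 | h0
    · simpa [quadrantPoint_of_nonneg h0, div_lt_one hs]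
    · rw [quadrantPoint_of_nonpos h0, zero_div, zero_add, div_lt_one ht]
      linarith
  · rw [Set.mem_preimage, Set.mem_ofPred_eq]
    rcases hB b hb with h | h
    · rw [quadrantPoint_of_nonpos (by linarith), zero_div, zero_add, one_lt_div ht]
      linarith
    · simpa [quadrantPoint_of_nonneg (hs.trans h).le, one_lt_div hs]

lemma exists_pos_threshold {A B : Finset ℝ} (h : ∀ a ∈ A, ∀ b ∈ B, 0 ≤ a → 0 ≤ b → a < b)
    (h0 : 0 ∉ B) : ∃ s > 0, (∀ a ∈ A, a < s) ∧ ∀ b ∈ B, 0 ≤ b → s < b := by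
  obtain ⟨s, hAs, hBs⟩ := Order.exists_between_finsets (insert 0 A) {b ∈ B | 0 ≤ b} (by grind)
  exact ⟨s, hAs 0 (by simp), fun a ha ↦ hAs a (by simp [ha]), fun b hb hb0 ↦
    hBs b (by simp [hb, hb0])⟩

lemma IsInner.disjoint_convexHull {A B : Finset ℝ} (hA : A.Nonempty)
    (h : IsInner (A : Set ℝ) (B : Set ℝ)) :
    Disjoint (convexHull ℝ (quadrantPoint '' A)) (convexHull ℝ (quadrantPoint '' B)) := by
  have h0 : 0 ∉ B := h.zero_notMem (Finset.coe_nonempty.2 hA)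
  obtain ⟨s, hs, hAs, hBs⟩ := exists_pos_threshold h.1 h0
  obtain ⟨t, ht, hAt, hBt⟩ := exists_pos_threshold (A := A.image Neg.neg) (B := B.image Neg.neg)
    (by simpa using h.2) (by simpa using h0)
  refine disjoint_convexHull_of_thresholds hs ht (fun a ha ↦ ⟨?_, hAs a ha⟩) fun b hb ↦ ?_
  · exact neg_lt.1 (hAt _ (Finset.mem_image_of_mem _ ha))
  · refine (le_total 0 b).symm.imp (fun hb0 ↦ ?_) (hBs b hb)
    exact lt_neg.1 (hBt _ (Finset.mem_image_of_mem _ hb) (neg_nonneg.2 hb0))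

end Geometry

section Blocks

variable {α β : Type*} [DecidableEq β]

/-- Membership in a common block of `π`, extended by equality outside of the partitioned set. -/
def sameBlock {s : Finset β} (π : Finpartition s) : Setoid β where
  r a b := a = b ∨ b ∈ π.part a
  iseqv :=
    { refl _ := .inl rfl
      symm h := h.imp Eq.symm fun h ↦ by
        rwa [π.mem_part_iff_exists, exists_congr fun _ ↦ and_congr_right' and_comm,
          ← π.mem_part_iff_exists]
      trans {a b c} hab hbc := by
        rcases hab with rfl | hab
        · exact hbc
        rcases hbc with rfl | hbc
        · exact .inr hab
        have hpart : π.part b = π.part a :=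
          π.part_eq_of_mem (π.part_mem.2 (π.part_nonempty.1 ⟨b, hab⟩)) hab
        exact .inr (hpart ▸ hbc) }

variable {s : Finset β} {π μ : Finpartition s} {a b : β}

lemma sameBlock_apply : sameBlock π a b ↔ a = b ∨ b ∈ π.part a := Iff.rfl

lemma mem_part_iff_sameBlock : b ∈ π.part a ↔ a ∈ s ∧ sameBlock π a b := by
  refine ⟨fun h ↦ ⟨π.part_nonempty.1 ⟨b, h⟩, .inr h⟩, ?_⟩
  rintro ⟨ha, rfl | h⟩
  · exact π.mem_part_self.2 ha
  · exact h

lemma sameBlock_of_mem_parts {B : Finset β} (hB : B ∈ π.parts) (ha : a ∈ B) (hb : b ∈ B) :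
    sameBlock π a b :=
  .inr ((π.part_eq_of_mem hB ha).symm ▸ hb)

lemma not_sameBlock_of_mem_parts {B C : Finset β} (hB : B ∈ π.parts) (hC : C ∈ π.parts)
    (hBC : B ≠ C) (ha : a ∈ B) (hb : b ∈ C) : ¬ sameBlock π a b := by
  intro h
  have : b ∈ B := π.part_eq_of_mem hB ha ▸ mem_part_iff_sameBlock.2 ⟨π.le hB ha, h⟩
  exact hBC (π.eq_of_mem_parts hB hC this hb)

lemma finpartition_ext (h : ∀ a ∈ s, π.part a = μ.part a) : π = μ := by
  have hparts (ν : Finpartition s) : ν.parts = s.image ν.part := by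
    refine Finset.coe_injective ?_
    rw [Finset.coe_image]
    exact ν.part_surjOn.antisymm (Set.image_subset_iff.2 fun a ha ↦ ν.part_mem.2 ha)
  rw [Finpartition.ext_iff, hparts π, hparts μ, Finset.image_congr h]

variable (f : α ↪ β) {Q : Finset α}

lemma isSupportedOn_comap_sameBlock (π : Finpartition (Q.map f)) :
    IsSupportedOn ((sameBlock π).comap f) Q := fun a b hab hne ↦ by
  have hab : f b ∈ π.part (f a) := hab.resolve_left (f.injective.ne hne)
  simpa using π.part_nonempty.1 ⟨_, hab⟩

lemma comap_sameBlock_injective :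
    Function.Injective fun π : Finpartition (Q.map f) ↦ (sameBlock π).comap f := by
  intro π μ h
  refine finpartition_ext fun a ha ↦ Finset.ext fun b ↦ ?_
  by_cases hb : b ∈ Q.map f
  · obtain ⟨x, -, rfl⟩ := Finset.mem_map.1 ha
    obtain ⟨y, -, rfl⟩ := Finset.mem_map.1 hb
    rw [mem_part_iff_sameBlock, mem_part_iff_sameBlock]
    exact and_congr_right' (Setoid.ext_iff.1 h x y)
  · exact iff_of_false (fun h ↦ hb (π.part_subset _ h)) fun h ↦ hb (μ.part_subset _ h)

open Classical in
lemma exists_comap_sameBlock_eq [Nonempty α] {r : Setoid α} (hr : IsSupportedOn r Q) :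
    ∃ π : Finpartition (Q.map f), (sameBlock π).comap f = r := by
  refine ⟨.ofSetSetoid (r.comap (Function.invFun f)) (Q.map f), Setoid.ext fun a b ↦ ?_⟩
  rw [Setoid.comap_rel, sameBlock_apply, Finpartition.mem_part_ofSetSetoid_iff_rel,
    Setoid.comap_rel, Function.leftInverse_invFun f.injective,
    Function.leftInverse_invFun f.injective, f.apply_eq_iff_eq, Finset.mem_map', Finset.mem_map']
  refine ⟨fun h ↦ h.elim (fun h ↦ h ▸ r.refl' a) fun h ↦ h.2.2,
    fun h ↦ or_iff_not_imp_left.2 fun hne ↦ ?_⟩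
  exact ⟨hr h hne, hr (r.symm' h) (Ne.symm hne), h⟩

end Blocks

section LatticePoints

/-- The points of all closed cone configurations, with `Vconfig m n` indexed by the interval from
`-n` to `m`. -/
noncomputable def latticePoint : ℤ ↪ ℂ :=
  ⟨fun z ↦ quadrantPoint z, quadrantPoint_injective.comp Int.cast_injective⟩

lemma latticePoint_apply (z : ℤ) : latticePoint z = quadrantPoint z := rfl

lemma latticePoint_natCast (j : ℕ) : latticePoint j = j := by
  rw [latticePoint_apply, quadrantPoint_of_nonneg (by positivity)]
  simp [Complex.ext_iff]

lemma latticePoint_neg_natCast (k : ℕ) : latticePoint (-k) = k * Complex.I := by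
  rw [latticePoint_apply, quadrantPoint_of_nonpos (by simp)]
  simp [Complex.ext_iff]

lemma Vconfig_eq_map_latticePoint (m n : ℕ) :
    Vconfig m n = (Finset.Icc (-n : ℤ) m).map latticePoint := by
  ext w
  simp only [Vconfig, Uconfig, Finset.mem_insert, Finset.mem_union, Finset.mem_image,
    Finset.mem_Icc, Finset.mem_map]
  constructor
  · rintro (rfl | ⟨j, hj, rfl⟩ | ⟨k, hk, rfl⟩)
    · exact ⟨(0 : ℕ), by omega, by rw [latticePoint_natCast, Nat.cast_zero]⟩
    · exact ⟨j, by omega, latticePoint_natCast j⟩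
    · exact ⟨-k, by omega, latticePoint_neg_natCast k⟩
  · rintro ⟨z, hz, rfl⟩
    obtain ⟨k, rfl | rfl⟩ := z.eq_nat_or_neg
    · rcases k.eq_zero_or_pos with rfl | hk
      · exact .inl (by rw [latticePoint_natCast, Nat.cast_zero])
      · exact .inr (.inl ⟨k, by omega, (latticePoint_natCast k).symm⟩)
    · rcases k.eq_zero_or_pos with rfl | hk
      · exact .inl (by rw [latticePoint_neg_natCast, Nat.cast_zero, zero_mul])
      · exact .inr (.inr ⟨k, by omega, (latticePoint_neg_natCast k).symm⟩)

lemma IsInner.disjoint_convexHull_map_latticePoint {A B : Finset ℤ} (hA : A.Nonempty)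
    (h : IsInner (A : Set ℤ) (B : Set ℤ)) :
    Disjoint (convexHull ℝ (A.map latticePoint : Set ℂ))
      (convexHull ℝ (B.map latticePoint : Set ℂ)) := by
  have hcast (S : Finset ℤ) : (S.map latticePoint : Set ℂ) =
      quadrantPoint '' (S.image (Int.cast : ℤ → ℝ) : Set ℝ) := by
    rw [Finset.coe_map, Finset.coe_image, Set.image_image]
    rfl
  rw [hcast, hcast]
  refine IsInner.disjoint_convexHull (hA.image _) ?_
  rw [Finset.coe_image, Finset.coe_image]
  exact h.image Int.cast_strictMono Int.cast_zero

end LatticePoints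

section Characterization

lemma sameBlock_of_not_disjoint_segment {P : Finset ℂ} {π : Finpartition P}
    (h : IsNoncrossing π) {a b c d : ℂ} (ha : a ∈ P) (hc : c ∈ P) (hab : sameBlock π a b)
    (hcd : sameBlock π c d) (hmeet : ¬ Disjoint (segment ℝ a b) (segment ℝ c d)) :
    sameBlock π a c := by
  by_contra hac
  have hne : π.part a ≠ π.part c := fun e ↦ hac (.inr (e ▸ π.mem_part_self.2 hc))
  refine hmeet ((h (π.part_mem.2 ha) (π.part_mem.2 hc) hne).mono
    (segment_subset_convexHull (π.mem_part_self.2 ha) (mem_part_iff_sameBlock.2 ⟨ha, hab⟩))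
    (segment_subset_convexHull (π.mem_part_self.2 hc) (mem_part_iff_sameBlock.2 ⟨hc, hcd⟩)))

variable {Q : Finset ℤ} {π : Finpartition (Q.map latticePoint)}

lemma isConeNoncrossing_of_isNoncrossing (hQ : (Q : Set ℤ).OrdConnected) (h : IsNoncrossing π) :
    IsConeNoncrossing ((sameBlock π).comap latticePoint) where
  convex a b c hab hbc h0 hac := by
    rcases eq_or_ne a c with rfl | hne
    · rw [hab.antisymm hbc]
    have hsupp := isSupportedOn_comap_sameBlock latticePoint π
    have ha : a ∈ Q := hsupp hac hne
    have hc : c ∈ Q := hsupp (Setoid.symm' _ hac) hne.symm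
    have hb : b ∈ Q := hQ.out ha hc ⟨hab, hbc⟩
    refine sameBlock_of_not_disjoint_segment h
      (Finset.mem_map_of_mem _ ha) (Finset.mem_map_of_mem _ hb)
      hac (Setoid.refl' _ _) (Set.not_disjoint_iff.2 ⟨_, ?_, left_mem_segment ℝ _ _⟩)
    exact quadrantPoint_mem_segment (Int.cast_le.2 hab) (Int.cast_le.2 hbc) (by exact_mod_cast h0)
  nested a b c d ha hac hbd hd hab hcd := by
    rcases hac.eq_or_lt with rfl | hlt
    · exact Setoid.refl' _ _
    rcases (hbd.trans hd).eq_or_lt with rfl | hb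
    · obtain rfl : d = 0 := hd.antisymm hbd
      exact Setoid.trans' _ hab (Setoid.symm' _ hcd)
    have hsupp := isSupportedOn_comap_sameBlock latticePoint π
    exact sameBlock_of_not_disjoint_segment h (Finset.mem_map_of_mem _ (hsupp hab (by omega)))
      (Finset.mem_map_of_mem _ (hsupp hcd (by omega))) hab hcd
      (not_disjoint_segment_quadrantPoint (by exact_mod_cast ha) (by exact_mod_cast hlt)
        (by exact_mod_cast hbd) (by exact_mod_cast hd) (by exact_mod_cast hb))

lemma isNoncrossing_of_isConeNoncrossing
    (h : IsConeNoncrossing ((sameBlock π).comap latticePoint)) : IsNoncrossing π := by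
  intro B hB C hC hBC
  obtain ⟨A, -, rfl⟩ := Finset.subset_map_iff.1 (π.le hB)
  obtain ⟨D, -, rfl⟩ := Finset.subset_map_iff.1 (π.le hC)
  have hmem {S : Finset ℤ} {z : ℤ} (hz : z ∈ (S : Set ℤ)) : latticePoint z ∈ S.map latticePoint :=
    Finset.mem_map_of_mem _ hz
  rcases h.isInner_or_isInner (A := A) (B := D)
    (fun a ha a' ha' ↦ sameBlock_of_mem_parts hB (hmem ha) (hmem ha'))
    (fun d hd d' hd' ↦ sameBlock_of_mem_parts hC (hmem hd) (hmem hd'))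
    (fun a ha d hd ↦ not_sameBlock_of_mem_parts hB hC hBC (hmem ha) (hmem hd)) with hin | hin
  · exact hin.disjoint_convexHull_map_latticePoint
      (Finset.map_nonempty.1 (π.nonempty_of_mem_parts hB))
  · exact (hin.disjoint_convexHull_map_latticePoint
      (Finset.map_nonempty.1 (π.nonempty_of_mem_parts hC))).symm

end Characterization

section ConeRelations

/-- The noncrossing partitions of `Vconfig m n`, encoded as equivalence relations on `ℤ` via
`latticePoint`. -/
def coneRel (m n : ℕ) : Set (Setoid ℤ) :=
  {r | IsConeNoncrossing r ∧ IsSupportedOn r (Set.Icc (-n : ℤ) m)}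

variable (m n : ℕ)

lemma coneRel_finite : (coneRel m n).Finite := by
  refine (Set.finite_range fun π : Finpartition ((Finset.Icc (-n : ℤ) m).map latticePoint) ↦
    (sameBlock π).comap latticePoint).subset fun r hr ↦ ?_
  exact exists_comap_sameBlock_eq latticePoint (by rw [Finset.coe_Icc]; exact hr.2)

lemma card_NC_Vconfig : Nat.card (NC (Vconfig m n)) = (coneRel m n).ncard := by
  rw [Vconfig_eq_map_latticePoint, ← Nat.card_coe_set_eq]
  have hQ : ((Finset.Icc (-n : ℤ) m : Finset ℤ) : Set ℤ).OrdConnected := by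
    rw [Finset.coe_Icc]
    exact Set.ordConnected_Icc
  refine Nat.card_congr (.ofBijective (fun π ↦ ⟨(sameBlock π.1).comap latticePoint,
    isConeNoncrossing_of_isNoncrossing hQ π.2, ?_⟩) ⟨fun π μ h ↦ ?_, fun ⟨r, hr⟩ ↦ ?_⟩)
  · rw [← Finset.coe_Icc]
    exact isSupportedOn_comap_sameBlock latticePoint π.1
  · exact Subtype.ext (comap_sameBlock_injective latticePoint (congrArg Subtype.val h))
  · obtain ⟨π, rfl⟩ := exists_comap_sameBlock_eq latticePoint
      (Q := Finset.Icc (-n : ℤ) m) (by rw [Finset.coe_Icc]; exact hr.2)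
    exact ⟨⟨π, isNoncrossing_of_isConeNoncrossing hr.1⟩, rfl⟩

variable {m n} {r : Setoid ℤ}

lemma isSupportedOn_Ioo_of_mem_coneRel (hr : r ∈ coneRel m n) :
    IsSupportedOn r (Set.Ioo (-(n + 1) : ℤ) (m + 1)) :=
  hr.2.mono fun _ h ↦ ⟨by linarith [h.1], by linarith [h.2]⟩

lemma coneRel_subset_succ : coneRel m n ⊆ coneRel (m + 1) n := fun _ hr ↦
  ⟨hr.1, hr.2.mono (Set.Icc_subset_Icc_right (by simp))⟩

lemma isIsolated_of_mem_coneRel (hr : r ∈ coneRel m n) : IsIsolated r (m + 1) :=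
  .of_isSupportedOn hr.2 (by simp)

lemma isIsolated_neg_of_mem_coneRel (hr : r ∈ coneRel m n) : IsIsolated r (-(n + 1)) :=
  .of_isSupportedOn hr.2 (by simp)

lemma attach_mem_coneRel (hr : r ∈ coneRel m n) : attach r (m + 1) m ∈ coneRel (m + 1) n := by
  constructor
  · refine hr.1.comap (fun a b hab ↦ ?_) ?_ <;>
      simp only [Function.update_apply, id] <;> grind
  · refine (hr.2.attach _ _).mono fun z hz ↦ ?_
    simp only [Set.mem_insert_iff, Set.mem_Icc] at hz ⊢
    omega

lemma isolate_mem_coneRel (hr : r ∈ coneRel (m + 1) n) : isolate r (m + 1) ∈ coneRel m n := by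
  constructor
  · refine hr.1.isolate fun a b hab hlt ↦ ?_
    rcases eq_or_ne a b with rfl | hne
    · exact hlt.le
    · exact_mod_cast (hr.2 (r.symm' hab) hne.symm).2
  · refine (hr.2.isolate _).mono fun z hz ↦ ?_
    simp only [Set.mem_sdiff, Set.mem_singleton_iff, Set.mem_Icc] at hz ⊢
    omega

lemma mem_coneRel_of_isIsolated (hr : r ∈ coneRel (m + 1) n) (h : IsIsolated r (m + 1)) :
    r ∈ coneRel m n := by
  refine ⟨hr.1, (hr.2.sdiff_singleton h).mono fun z hz ↦ ?_⟩
  simp only [Set.mem_sdiff, Set.mem_singleton_iff, Set.mem_Icc] at hz ⊢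
  omega

lemma sep_isRemovable_eq {p : Setoid ℤ → Prop}
    (hp : ∀ r ∈ coneRel m n, p (attach r (m + 1) m) ↔ p r) :
    {r ∈ coneRel (m + 1) n | IsRemovable r (m + 1) m ∧ p r} =
      {r ∈ coneRel m n | p r} ∪ (attach · (m + 1) m) '' {r ∈ coneRel m n | p r} := by
  ext r
  constructor
  · rintro ⟨hr, hiso | hrel, hpr⟩
    · exact .inl ⟨mem_coneRel_of_isIsolated hr hiso, hpr⟩
    · have hattach := attach_isolate (by simp) hrel
      have hmem := isolate_mem_coneRel hr
      exact .inr ⟨_, ⟨hmem, (hp _ hmem).1 (hattach.symm ▸ hpr)⟩, hattach⟩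
  · rintro (⟨hr, hpr⟩ | ⟨r, ⟨hr, hpr⟩, rfl⟩)
    · exact ⟨coneRel_subset_succ hr, .inl (isIsolated_of_mem_coneRel hr), hpr⟩
    · exact ⟨attach_mem_coneRel hr, .inr (attach_rel (by simp)), (hp r hr).2 hpr⟩

lemma ncard_sep_isRemovable_and {p : Setoid ℤ → Prop}
    (hp : ∀ r ∈ coneRel m n, p (attach r (m + 1) m) ↔ p r) :
    {r ∈ coneRel (m + 1) n | IsRemovable r (m + 1) m ∧ p r}.ncard =
      2 * {r ∈ coneRel m n | p r}.ncard := by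
  have hfin : {r ∈ coneRel m n | p r}.Finite := (coneRel_finite m n).subset (Set.sep_subset _ _)
  have hdisj : Disjoint {r ∈ coneRel m n | p r}
      ((attach · (m + 1) m) '' {r ∈ coneRel m n | p r}) := by
    rw [Set.disjoint_left]
    rintro _ hr ⟨s, -, rfl⟩
    have := isIsolated_of_mem_coneRel hr.1 (attach_rel (by simp))
    omega
  have hinj : Set.InjOn (attach · (m + 1 : ℤ) m) {r ∈ coneRel m n | p r} :=
    (attach_injOn _ _).mono fun r hr ↦ isIsolated_of_mem_coneRel hr.1
  rw [sep_isRemovable_eq hp, Set.ncard_union_eq hdisj hfin (hfin.image _),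
    hinj.ncard_image, two_mul]

lemma ncard_sep_isRemovable (m n : ℕ) :
    {r ∈ coneRel (m + 1) n | IsRemovable r (m + 1) m}.ncard = 2 * (coneRel m n).ncard := by
  simpa using ncard_sep_isRemovable_and (m := m) (n := n) (p := fun _ ↦ True) (by simp)

lemma comap_neg_mem_coneRel (hr : r ∈ coneRel m n) : r.comap Neg.neg ∈ coneRel n m := by
  refine ⟨hr.1.comap_antitone (fun _ _ ↦ neg_le_neg) neg_zero, fun a b hab hne ↦ ?_⟩
  have := hr.2 hab (neg_injective.ne hne)
  rw [Set.mem_Icc] at this ⊢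
  omega

lemma comap_neg_involutive : Function.Involutive fun r : Setoid ℤ ↦ r.comap Neg.neg := fun r ↦ by
  ext a b
  simp only [Setoid.comap_rel, neg_neg]

lemma ncard_sep_comap_neg (m n : ℕ) (p : Setoid ℤ → Prop) :
    {r ∈ coneRel m n | p (r.comap Neg.neg)}.ncard = {r ∈ coneRel n m | p r}.ncard := by
  rw [← Set.ncard_preimage_of_injective_subset_range (s := {r ∈ coneRel n m | p r})
    comap_neg_involutive.injective
    (by rw [comap_neg_involutive.surjective.range_eq]; exact Set.subset_univ _)]
  refine congrArg _ (Set.ext fun r ↦ and_congr_left' ⟨comap_neg_mem_coneRel, fun h ↦ ?_⟩)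
  exact comap_neg_involutive r ▸ comap_neg_mem_coneRel h

lemma ncard_coneRel_comm (m n : ℕ) : (coneRel m n).ncard = (coneRel n m).ncard := by
  simpa using ncard_sep_comap_neg m n fun _ ↦ True

lemma isRemovable_comap_neg (r : Setoid ℤ) (x y : ℤ) :
    IsRemovable (r.comap Neg.neg) x y ↔ IsRemovable r (-x) (-y) := by
  refine or_congr ⟨fun h z hz ↦ ?_, fun h z hz ↦ neg_injective (h hz)⟩ Iff.rfl
  rw [← h (y := -z) (by rwa [Setoid.comap_rel, neg_neg]), neg_neg]

lemma ncard_sep_isRemovable_neg (m n : ℕ) :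
    {r ∈ coneRel m (n + 1) | IsRemovable r (-(n + 1)) (-n)}.ncard = 2 * (coneRel m n).ncard := by
  rw [ncard_coneRel_comm, ← ncard_sep_isRemovable, ← ncard_sep_comap_neg]
  simp only [isRemovable_comap_neg, neg_neg]

lemma ncard_sep_isRemovable_and_isRemovable_neg (m n : ℕ) :
    {r ∈ coneRel (m + 1) (n + 1) |
      IsRemovable r (m + 1) m ∧ IsRemovable r (-(n + 1)) (-n)}.ncard =
      4 * (coneRel m n).ncard := by
  rw [ncard_sep_isRemovable_and fun r hr ↦ isRemovable_attach_iff (isIsolated_of_mem_coneRel hr)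
    (by omega) (by omega) (by omega), ncard_sep_isRemovable_neg]
  ring

lemma neg_of_not_isRemovable (hr : r ∈ coneRel (m + 1) n) (h : ¬ IsRemovable r (m + 1) m) {z : ℤ}
    (hz : r (m + 1) z) (hne : z ≠ m + 1) : z < 0 := by
  by_contra! h0
  have hzm : z ≤ m + 1 := by exact_mod_cast (hr.2 (r.symm' hz) hne).2
  have hzm' := hr.1.convex (b := (m : ℤ)) (by omega) (by omega) (.inl h0) (r.symm' hz)
  exact h (.inr (r.trans' hz hzm'))

lemma pos_of_not_isRemovable_neg (hr : r ∈ coneRel m (n + 1))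
    (h : ¬ IsRemovable r (-(n + 1)) (-n)) {z : ℤ} (hz : r (-(n + 1)) z) (hne : z ≠ -(n + 1)) :
    0 < z := by
  refine neg_lt_zero.1 (neg_of_not_isRemovable (comap_neg_mem_coneRel hr)
    (by rwa [isRemovable_comap_neg]) (z := -z) ?_ (by omega))
  rwa [Setoid.comap_rel, neg_neg]

lemma rel_of_not_isRemovable (hr : r ∈ coneRel (m + 1) (n + 1)) (hm : ¬ IsRemovable r (m + 1) m)
    (hn : ¬ IsRemovable r (-(n + 1)) (-n)) : r (-(n + 1)) (m + 1) := by
  obtain ⟨z, hz, hzm⟩ : ∃ z, r (m + 1) z ∧ z ≠ m + 1 := by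
    simpa [IsIsolated] using mt Or.inl hm
  obtain ⟨w, hw, hwn⟩ : ∃ w, r (-(n + 1)) w ∧ w ≠ -(n + 1) := by
    simpa [IsIsolated] using mt Or.inl hn
  have hz0 := neg_of_not_isRemovable hr hm hz hzm
  have hw0 := pos_of_not_isRemovable_neg hr hn hw hwn
  have hzn : -(n + 1 : ℤ) ≤ z := by exact_mod_cast (hr.2 (r.symm' hz) hzm).1
  have hwm : w ≤ m + 1 := by exact_mod_cast (hr.2 (r.symm' hw) hwn).2
  exact r.trans' hw (hr.1.nested hw0.le hwm hzn hz0.le (r.symm' hw) hz)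

lemma eq_of_not_isRemovable (hr : r ∈ coneRel (m + 1) (n + 1)) (hm : ¬ IsRemovable r (m + 1) m)
    (hn : ¬ IsRemovable r (-(n + 1)) (-n)) {z : ℤ} (hz : r (-(n + 1)) z) :
    z = -(n + 1) ∨ z = m + 1 := by
  by_contra! hne
  have h0 := pos_of_not_isRemovable_neg hr hn hz hne.1
  have hrel := r.trans' (r.symm' (rel_of_not_isRemovable hr hm hn)) hz
  exact h0.not_gt (neg_of_not_isRemovable hr hm hrel hne.2)

lemma isolate_neg_mem_coneRel (hr : r ∈ coneRel (m + 1) (n + 1)) (hm : ¬ IsRemovable r (m + 1) m)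
    (hn : ¬ IsRemovable r (-(n + 1)) (-n)) : isolate r (-(n + 1)) ∈ coneRel m n := by
  constructor
  · refine hr.1.isolate fun a b hab hlt ↦ ?_
    by_contra! hba
    have := (hr.2 hab (by omega)).1
    omega
  · intro a b hab hne
    obtain ⟨ha, hb, hab⟩ := hab.resolve_left hne
    have ham : a ≠ m + 1 := by
      rintro rfl
      have := eq_of_not_isRemovable hr hm hn (r.trans' (rel_of_not_isRemovable hr hm hn) hab)
      omega
    have := hr.2 hab hne
    rw [Set.mem_Icc] at this ⊢
    omega

lemma attach_neg_mem_coneRel (hr : r ∈ coneRel m n) :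
    attach r (-(n + 1)) (m + 1) ∈ coneRel (m + 1) (n + 1) := by
  refine ⟨hr.1.attach (by omega) (by omega) (isSupportedOn_Ioo_of_mem_coneRel hr),
    (hr.2.attach _ _).mono fun z hz ↦ ?_⟩
  simp only [Set.mem_insert_iff, Set.mem_Icc] at hz ⊢
  omega

lemma sep_not_isRemovable_eq (m n : ℕ) :
    {r ∈ coneRel (m + 1) (n + 1) | ¬ IsRemovable r (m + 1) m ∧ ¬ IsRemovable r (-(n + 1)) (-n)} =
      (attach · (-(n + 1) : ℤ) (m + 1 : ℤ)) '' coneRel m n := by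
  ext r
  constructor
  · rintro ⟨hr, hm, hn⟩
    exact ⟨_, isolate_neg_mem_coneRel hr hm hn,
      attach_isolate (by omega) (rel_of_not_isRemovable hr hm hn)⟩
  · rintro ⟨r, hr, rfl⟩
    have hm := isIsolated_of_mem_coneRel hr
    have hn := isIsolated_neg_of_mem_coneRel hr
    exact ⟨attach_neg_mem_coneRel hr,
      not_isRemovable_attach_right hn hm (by omega) (by omega) (by omega),
      not_isRemovable_attach_left hn hm (by omega) (by omega) (by omega)⟩

lemma ncard_sep_not_isRemovable (m n : ℕ) :
    {r ∈ coneRel (m + 1) (n + 1) |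
      ¬ IsRemovable r (m + 1) m ∧ ¬ IsRemovable r (-(n + 1)) (-n)}.ncard = (coneRel m n).ncard := by
  rw [sep_not_isRemovable_eq, Set.InjOn.ncard_image]
  exact (attach_injOn _ _).mono fun r hr ↦ isIsolated_neg_of_mem_coneRel hr

lemma ncard_coneRel_succ_succ (m n : ℕ) :
    (coneRel (m + 1) (n + 1)).ncard + 3 * (coneRel m n).ncard =
      2 * (coneRel m (n + 1)).ncard + 2 * (coneRel (m + 1) n).ncard := by
  have h := ncard_add_ncard_sep_and (coneRel_finite (m + 1) (n + 1))
    (fun r ↦ IsRemovable r (m + 1) m) fun r ↦ IsRemovable r (-(n + 1)) (-n)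
  rw [ncard_sep_isRemovable_and_isRemovable_neg, ncard_sep_isRemovable, ncard_sep_isRemovable_neg,
    ncard_sep_not_isRemovable] at h
  omega

lemma ncard_coneRel_zero_zero : (coneRel 0 0).ncard = 1 := by
  refine Set.ncard_eq_one.2 ⟨⊥, Set.eq_singleton_iff_unique_mem.2 ⟨⟨.bot, ?_⟩, fun r hr ↦ ?_⟩⟩
  · exact fun a b hab hne ↦ absurd hab hne
  · refine eq_bot_iff.2 fun a b hab ↦ by_contra fun hne ↦ hne ?_
    have ha := hr.2 hab hne
    have hb := hr.2 (r.symm' hab) (Ne.symm hne)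
    simp only [Set.mem_Icc] at ha hb
    exact show a = b by omega

lemma ncard_coneRel_succ_zero (m : ℕ) :
    (coneRel (m + 1) 0).ncard = 2 * (coneRel m 0).ncard := by
  rw [← ncard_sep_isRemovable]
  refine congrArg _ (Set.ext fun r ↦ (and_iff_left_of_imp fun hr ↦ by_contra fun h ↦ ?_).symm)
  obtain ⟨z, hz, hzm⟩ : ∃ z, r (m + 1) z ∧ z ≠ m + 1 := by
    simpa [IsIsolated] using mt Or.inl h
  have hneg := neg_of_not_isRemovable hr h hz hzm
  have := (hr.2 (r.symm' hz) hzm).1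
  omega

lemma ncard_coneRel_zero_succ (n : ℕ) :
    (coneRel 0 (n + 1)).ncard = 2 * (coneRel 0 n).ncard := by
  rw [ncard_coneRel_comm, ncard_coneRel_succ_zero, ncard_coneRel_comm]

end ConeRelations

section PowerSeries

variable {R : Type*} [CommRing R]

open MvPowerSeries in
lemma mul_eq_one_of_linear_recurrence {a b c : R} {f : ℕ → ℕ → R} {F : MvPowerSeries (Fin 2) R}
    (hF : ∀ d, coeff d F = f (d 0) (d 1)) (h00 : f 0 0 = 1)
    (hl : ∀ m, f (m + 1) 0 = a * f m 0) (hr : ∀ n, f 0 (n + 1) = b * f 0 n)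
    (hlr : ∀ m n, f (m + 1) (n + 1) + c * f m n = a * f m (n + 1) + b * f (m + 1) n) :
    (1 - C a * X 0 - C b * X 1 + C c * (X 0 * X 1)) * F = 1 := by
  have hX (i : Fin 2) (r : R) : C r * X i = monomial (Finsupp.single i 1) r := by
    rw [X_def, ← monomial_zero_eq_C_apply, monomial_mul_monomial, zero_add, mul_one]
  have hXX : C c * (X 0 * X 1) =
      monomial (Finsupp.single (0 : Fin 2) 1 + Finsupp.single 1 1) c := by
    rw [← mul_assoc, hX, X_def, monomial_mul_monomial, mul_one]
  have hle (i : Fin 2) (d : Fin 2 →₀ ℕ) : Finsupp.single i 1 ≤ d ↔ 1 ≤ d i :=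
    Finsupp.single_le_iff
  have hle_both (d : Fin 2 →₀ ℕ) :
      Finsupp.single 0 1 + Finsupp.single 1 1 ≤ d ↔ 1 ≤ d 0 ∧ 1 ≤ d 1 := by
    simp [Finsupp.le_def, Fin.forall_fin_two]
  have hzero (d : Fin 2 →₀ ℕ) : d = 0 ↔ d 0 = 0 ∧ d 1 = 0 := by
    simp [Finsupp.ext_iff, Fin.forall_fin_two]
  ext d
  simp only [hXX, hX, add_mul, sub_mul, one_mul, map_add, map_sub, coeff_monomial_mul, coeff_one,
    hF, hle, hle_both, hzero, Finsupp.coe_tsub, Finsupp.coe_add, Pi.sub_apply, Pi.add_apply,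
    Finsupp.single_apply]
  rcases d 0 with _ | m <;> rcases d 1 with _ | n
  · simp [h00]
  · simp [hr]
  · simp [hl]
  · have hrec := hlr m n
    simp only [le_add_iff_nonneg_left, zero_le, ↓reduceIte, add_tsub_cancel_right, Fin.isValue,
      zero_ne_one, tsub_zero, one_ne_zero, and_self, add_zero, zero_add, Nat.add_eq_zero_iff,
      and_false]
    linear_combination hrec

end PowerSeries

end ConePartition

open ConePartition in
/-- `(1 - 2X - 2Y + 3XY) ⬝ V(X,Y) = 1` in `ℤ⟦X,Y⟧`. -/
theorem nc_V_generating_function :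
    (1 - 2 * MvPowerSeries.X 0 - 2 * MvPowerSeries.X 1 +
        3 * (MvPowerSeries.X 0 * MvPowerSeries.X 1)) * Vseries = 1 := by
  have hrec := mul_eq_one_of_linear_recurrence (R := ℤ) (a := 2) (b := 2) (c := 3)
    (f := fun m n ↦ (coneRel m n).ncard) (F := Vseries) ?_ ?_ ?_ ?_ ?_
  · simpa only [map_ofNat] using hrec
  · exact fun d ↦ congrArg _ (card_NC_Vconfig (d 0) (d 1))
  · exact_mod_cast ncard_coneRel_zero_zero
  · exact_mod_cast ncard_coneRel_succ_zero
  · exact_mod_cast ncard_coneRel_zero_succ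
  · exact_mod_cast ncard_coneRel_succ_succ
end
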